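/- arXiv:2512.18377 — 6 statements merged into one kernel-verified Lean document; each statement's English description precedes it below -/
import Mathlib

section
/- Let X be a Banach space, T > 0, F ∈ C^6([0,T] × X, X) satisfying ‖F(t,x) − F(t,y)‖ ≤ μ‖x − y‖ for some μ ≥ 0 and all (t,x,y) ∈ [0,T] × X × X, and suppose the initial value problem u'(t) = F(t, u(t)) on [0,T], u(0) = u₀, has a unique solution u ∈ C^7([0,T], X). Then there exist constants C > 0 and k₀ > 0 such that for every positive integer N with k = T/N ≤ k₀, the DC6RK2/4 sequence {u^{6,n}} satisfies, for every n = 0, 1, …, N − 1, the recursion ‖u^{6,n+1} − u(t_{n+1})‖ ≤ (1 + μk + (1/2)μ²k²)·‖u^{6,n} − u(t_n)‖ + C k^7, where t_n = nk. -/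
open Finset

variable {X : Type*} [NormedAddCommGroup X] [NormedSpace ℝ X] [CompleteSpace X]

/-- One step of the classical fourth-order Runge–Kutta method for `u' = F(t,u)`
from time `t` with step `h`. -/
noncomputable def rk4Step (F : ℝ → X → X) (t h : ℝ) (x : X) : X :=
  let K1 := F t x
  let K2 := F (t + h / 2) (x + (h / 2) • K1)
  let K3 := F (t + h / 2) (x + (h / 2) • K2)
  let K4 := F (t + h) (x + h • K3)
  x + (h / 6) • (K1 + (2 : ℝ) • K2 + (2 : ℝ) • K3 + K4)

/-- `i` steps of RK4 with step `h`, starting from `x` at time `t`: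
`rk4Iter F t h x i` is the approximation `u^{4,·,i}` of `u(t + i h)`. -/
noncomputable def rk4Iter (F : ℝ → X → X) (t h : ℝ) (x : X) : ℕ → X
  | 0 => x
  | i + 1 => rk4Step F (t + (i : ℝ) * h) h (rk4Iter F t h x i)

/-- The correction term `aₙ` of the DC6RK2/4 scheme, as a linear combination of the
six RK4 sub-step values `w 0, …, w 5`. -/
noncomputable def dcA (w : ℕ → X) : X :=
  (125 / 384 : ℝ) • ((-3 : ℝ) • w 0 - w 1 + (18 : ℝ) • w 2 - (18 : ℝ) • w 3
    + w 4 + (3 : ℝ) • w 5)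

/-- The correction term `bₙ` of the DC6RK2/4 scheme, as a linear combination of the
six RK4 sub-step values `w 0, …, w 5`. -/
noncomputable def dcB (w : ℕ → X) : X :=
  (25 / 768 : ℝ) • ((145 : ℝ) • w 0 - (387 : ℝ) • w 1 + (402 : ℝ) • w 2
    - (238 : ℝ) • w 3 + (93 : ℝ) • w 4 - (15 : ℝ) • w 5)

/-- One step of the hybrid deferred-correction scheme DC6RK2/4 from time `t` with
step `k` (inner RK4 step `h = k/5`). -/
noncomputable def dcStep (F : ℝ → X → X) (t k : ℝ) (x : X) : X :=
  let w : ℕ → X := rk4Iter F t (k / 5) x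
  x + dcA w + k • F (t + k / 2) (x + (k / 2) • F t x + dcB w)

/-- The DC6RK2/4 sequence `u^{6,n}` for `u' = F(t,u)`, `u(0) = u₀`, with step `k`. -/
noncomputable def dcSeq (F : ℝ → X → X) (u0 : X) (k : ℝ) : ℕ → X
  | 0 => u0
  | n + 1 => dcStep F ((n : ℝ) * k) k (dcSeq F u0 k n)


set_option linter.unusedSectionVars false
open Asymptotics Filter Topology

theorem taylor_seq (n : ℕ) : ∀ (f : ℕ → ℝ → X) (H M : ℝ), 0 ≤ H → 
    (∀ j < n, ∀ s ∈ Set.Icc 0 H, HasDerivWithinAt (f j) (f (j+1) s) (Set.Icc 0 H) s) →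
    (∀ s ∈ Set.Icc 0 H, ‖f n s‖ ≤ M) →
    ∀ s ∈ Set.Icc 0 H, ‖f 0 s - ∑ j ∈ range n, (s ^ j / (j.factorial : ℝ)) • f j 0‖ ≤ M * s ^ n := by
  induction n with
  | zero => intro f H M hH hd hM s hs; simpa using hM s hs
  | succ n ih =>
    intro f H M hH hd hM s hs
    have hM0 : 0 ≤ M := (norm_nonneg _).trans (hM s hs)
    have ih' := ih (fun j => f (j+1)) H M hH (fun j hj => hd (j+1) (by omega)) hM
    have key := (convex_Icc (0:ℝ) s).norm_image_sub_le_of_norm_hasDerivWithin_le 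
      (f := fun r => f 0 r - ∑ j ∈ range (n+1), (r ^ j / (j.factorial : ℝ)) • f j 0)
      (f' := fun r => f 1 r - ∑ j ∈ range n, (r ^ j / (j.factorial : ℝ)) • f (j+1) 0)
      (C := M * s ^ n) (x := 0) (y := s) ?_ ?_ (by simp [hs.1]) (by simp [hs.1])
    · have e : ∑ j ∈ range (n+1), ((0:ℝ) ^ j / (j.factorial : ℝ)) • f j 0 = f 0 0 := by
        rw [sum_range_succ']; simp
      simp only [e, sub_self, sub_zero] at key
      refine key.trans (le_of_eq ?_)
      rw [Real.norm_of_nonneg hs.1]; ring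
    · intro r hr
      have hr' : r ∈ Set.Icc 0 H := ⟨hr.1, hr.2.trans hs.2⟩
      refine HasDerivWithinAt.sub ((hd 0 (by omega) r hr').mono 
        (Set.Icc_subset_Icc_right hs.2)) ?_
      have : HasDerivAt (fun r : ℝ => ∑ j ∈ range (n+1), (r ^ j / (j.factorial : ℝ)) • f j 0)
          (∑ j ∈ range (n+1), ((j * r ^ (j-1)) / (j.factorial : ℝ)) • f j 0) r := by
        refine HasDerivAt.fun_sum fun j _ => ?_
        exact ((hasDerivAt_pow j r).div_const _).smul_const _
      rw [sum_range_succ'] at this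
      convert this.hasDerivWithinAt using 1
      simp only [Nat.cast_zero, zero_mul, zero_div, zero_smul, add_zero, Nat.add_sub_cancel]
      refine sum_congr rfl fun j _ => ?_
      congr 1
      rw [Nat.factorial_succ]; push_cast
      have : (j.factorial : ℝ) ≠ 0 := by positivity
      field_simp
    · intro r hr
      refine (ih' r ⟨hr.1, hr.2.trans hs.2⟩).trans ?_
      gcongr
      exacts [hr.1, hr.2]

theorem taylor_dir {E : Type*} [NormedAddCommGroup E] [NormedSpace ℝ E] (S : Set E)
    (hS : UniqueDiffOn ℝ S) (hc : Convex ℝ S) (hk : IsCompact S) (v : E) (n : ℕ) (f : E → X)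
    (hf : ContDiffOn ℝ n f S) :
    ∃ G : ℕ → E → X, G 0 = f ∧ (∀ j m : ℕ, j + m = n → ContDiffOn ℝ m (G j) S) ∧
      (∀ p ∈ S, fderivWithin ℝ f S p v = G 1 p) ∧
      ∃ M : ℝ, ∀ i m : ℕ, i + m ≤ n → ∀ p ∈ S, ∀ h : ℝ, 0 ≤ h → p + h • v ∈ S →
        ‖G i (p + h • v) - ∑ j ∈ range m, (h ^ j / (j.factorial : ℝ)) • G (i + j) p‖ ≤ M * h ^ m := by
  let G : ℕ → E → X := fun j => Nat.rec f (fun _ g p => fderivWithin ℝ g S p v) j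
  have hG : ∀ j p, G (j+1) p = fderivWithin ℝ (G j) S p v := fun j p => rfl
  have hreg : ∀ j m : ℕ, j + m = n → ContDiffOn ℝ m (G j) S := by
    intro j
    induction j with
    | zero => intro m hm; obtain rfl : m = n := by omega
              exact hf
    | succ j ih => 
      intro m hm
      have := ih (m+1) (by omega)
      exact (this.fderivWithin hS (m := m) (by norm_cast)).clm_apply contDiffOn_const
  refine ⟨G, rfl, hreg, fun p _ => rfl, ?_⟩
  have hb : ∀ j ≤ n, ∃ C, ∀ p ∈ S, ‖G j p‖ ≤ C := fun j hj => 
    hk.exists_bound_of_continuousOn (hreg j (n-j) (by omega)).continuousOn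
  choose! C hC using hb
  refine ⟨∑ j ∈ range (n+1), |C j|, ?_⟩
  intro i m him p hp h hh hph
  have hseg : ∀ s ∈ Set.Icc 0 h, p + s • v ∈ S := by
    intro s hs
    rcases hh.eq_or_lt with rfl | hh'
    · have : s = 0 := le_antisymm hs.2 hs.1
      simpa [this] using hp
    · have := hc.add_smul_mem hp hph (t := s / h) ⟨div_nonneg hs.1 hh, div_le_one_of_le₀ hs.2 hh⟩
      rwa [smul_smul, div_mul_cancel₀ _ hh'.ne'] at this
  have := taylor_seq m (fun j s => G (i + j) (p + s • v)) h (∑ j ∈ range (n+1), |C j|) hh ?_ ?_ h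
    ⟨hh, le_rfl⟩
  · simpa using this
  · intro j hj s hs
    have h1 : DifferentiableWithinAt ℝ (G (i+j)) S (p + s • v) := 
      (hreg (i+j) (n - (i+j)) (by omega)).differentiableOn (by norm_cast; omega) _ (hseg s hs)
    have h2 : HasDerivWithinAt (fun s : ℝ => p + s • v) v (Set.Icc 0 h) s := by
      have := ((hasDerivWithinAt_id s (Set.Icc 0 h)).smul_const v).const_add p
      simpa using this
    have := h1.hasFDerivWithinAt.comp_hasDerivWithinAt s h2 hseg
    exact this
  · intro s hs
    refine (hC (i+m) him _ (hseg s hs)).trans ((le_abs_self _).trans ?_)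
    exact single_le_sum (f := fun j => |C j|) (fun j _ => abs_nonneg _) (by simp; omega)

theorem coeff_zero (h0 : ℝ) (hh0 : 0 < h0) (n : ℕ) : ∀ (c : ℕ → X) (M : ℝ),
    (∀ h, 0 < h → h ≤ h0 → ‖∑ j ∈ range n, h ^ j • c j‖ ≤ M * h ^ n) → ∀ j < n, c j = 0 := by
  induction n with
  | zero => intro c M _ j hj; omega
  | succ n ih =>
    intro c M hM
    have hc0 : c 0 = 0 := by
      have t1 : Tendsto (fun h : ℝ => ‖∑ j ∈ range (n+1), h ^ j • c j‖) (𝓝[>] 0) (𝓝 ‖c 0‖) := by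
        have : Continuous (fun h : ℝ => ‖∑ j ∈ range (n+1), h ^ j • c j‖) := by fun_prop
        have := this.tendsto 0
        rw [sum_range_succ'] at this
        simp only [pow_succ, mul_zero, zero_smul, sum_const_zero, pow_zero, one_smul, zero_add] at this
        simpa only [pow_succ] using this.mono_left nhdsWithin_le_nhds
      have t2 : Tendsto (fun h : ℝ => M * h ^ (n+1)) (𝓝[>] 0) (𝓝 0) := by
        have : Continuous (fun h : ℝ => M * h ^ (n+1)) := by fun_prop
        have := this.tendsto 0
        simp only [pow_succ, mul_zero] at this
        simpa only [pow_succ] using this.mono_left nhdsWithin_le_nhds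
      have := le_of_tendsto_of_tendsto t1 t2 (by
        filter_upwards [Ioc_mem_nhdsGT hh0] with h hh using hM h hh.1 hh.2)
      simpa using this
    have := ih (fun j => c (j+1)) M (by
      intro h hp hl
      have := hM h hp hl
      rw [sum_range_succ'] at this
      simp only [hc0, smul_zero, add_zero, pow_succ' h, mul_smul, ← smul_sum] at this
      rw [norm_smul, Real.norm_of_nonneg hp.le] at this
      have h3 : h * ‖∑ j ∈ range n, h ^ j • c (j+1)‖ ≤ h * (M * h ^ n) := by linarith
      exact le_of_mul_le_mul_left h3 hp)
    intro j hj
    cases j with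
    | zero => exact hc0
    | succ j => exact this j (by omega)


noncomputable def Jop (T : ℝ) (F : ℝ → X → X) (u : ℝ → X) (t : ℝ) : X →L[ℝ] X :=
  (fderivWithin ℝ (Function.uncurry F) (Set.Icc 0 T ×ˢ (Set.univ : Set X)) (t, u t)).comp
    (ContinuousLinearMap.inr ℝ ℝ X)

theorem uds (T : ℝ) (hT : 0 < T) : UniqueDiffOn ℝ (Set.Icc 0 T ×ˢ (Set.univ : Set X)) :=
  (uniqueDiffOn_Icc hT).prod uniqueDiffOn_univ

theorem lipD (T : ℝ) (hT : 0 < T) (F : ℝ → X → X) (u : ℝ → X)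
    (hF : ContDiffOn ℝ 6 (Function.uncurry F) (Set.Icc 0 T ×ˢ (Set.univ : Set X)))
    (hu : ContDiffOn ℝ 7 u (Set.Icc 0 T)) :
    ∃ L ≥ (0 : ℝ), ∃ ε > (0 : ℝ), ∀ t ∈ Set.Icc 0 T, ∀ p ∈ Set.Icc 0 T ×ˢ (Set.univ : Set X),
      dist p (t, u t) < ε →
      ‖fderivWithin ℝ (Function.uncurry F) (Set.Icc 0 T ×ˢ (Set.univ : Set X)) p
        - fderivWithin ℝ (Function.uncurry F) (Set.Icc 0 T ×ˢ (Set.univ : Set X)) (t, u t)‖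
        ≤ L * dist p (t, u t) := by
  set S := Set.Icc 0 T ×ˢ (Set.univ : Set X) with hS
  set D := fderivWithin ℝ (Function.uncurry F) S with hD
  have hDc : ContDiffOn ℝ 1 D S := hF.fderivWithin (uds T hT) (by norm_num)
  have hconv : Convex ℝ S := (convex_Icc 0 T).prod convex_univ
  have hK : IsCompact ((fun t => (t, u t)) '' Set.Icc 0 T) :=
    isCompact_Icc.image_of_continuousOn (continuousOn_id.prodMk hu.continuousOn)
  have hKS : ∀ q ∈ (fun t => (t, u t)) '' Set.Icc 0 T, q ∈ S := by
    rintro _ ⟨t, ht, rfl⟩; exact ⟨ht, trivial⟩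
  suffices h : ∃ L ≥ (0 : ℝ), ∃ ε > (0 : ℝ), ∀ q ∈ ((fun t => (t, u t)) '' Set.Icc 0 T),
      ∀ p ∈ S, q ∈ S → dist p q < ε → ‖D p - D q‖ ≤ L * dist p q by
    obtain ⟨L, hL, ε, hε, h⟩ := h
    exact ⟨L, hL, ε, hε, fun t ht p hp hd => h _ ⟨t, ht, rfl⟩ p hp ⟨ht, trivial⟩ hd⟩
  refine hK.induction_on (p := fun K => ∃ L ≥ (0 : ℝ), ∃ ε > (0 : ℝ), ∀ q ∈ K,
      ∀ p ∈ S, q ∈ S → dist p q < ε → ‖D p - D q‖ ≤ L * dist p q) ?_ ?_ ?_ ?_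
  · exact ⟨0, le_rfl, 1, one_pos, by simp⟩
  · rintro A B hAB ⟨L, hL, ε, hε, h⟩
    exact ⟨L, hL, ε, hε, fun q hq => h q (hAB hq)⟩
  · rintro A B ⟨L, hL, ε, hε, h⟩ ⟨L', hL', ε', hε', h'⟩
    refine ⟨max L L', le_max_of_le_left hL, min ε ε', lt_min hε hε', ?_⟩
    rintro q (hq | hq) p hp hqS hd
    · exact (h q hq p hp hqS (hd.trans_le (min_le_left _ _))).trans
        (mul_le_mul_of_nonneg_right (le_max_left _ _) dist_nonneg)
    · exact (h' q hq p hp hqS (hd.trans_le (min_le_right _ _))).trans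
        (mul_le_mul_of_nonneg_right (le_max_right _ _) dist_nonneg)
  · intro q hq
    obtain ⟨K, W, hW, hlip⟩ := (hDc q (hKS q hq)).exists_lipschitzOnWith hconv
    obtain ⟨ε, hε, hsub⟩ := Metric.mem_nhdsWithin_iff.1 hW
    refine ⟨Metric.ball q (ε/2), mem_nhdsWithin_of_mem_nhds (Metric.ball_mem_nhds _ (by positivity)),
      K, K.2, ε/2, by positivity, ?_⟩
    intro q' hq' p hp hq'S hd
    rw [← dist_eq_norm]
    rw [Metric.mem_ball] at hq'
    refine hlip.dist_le_mul p (hsub ⟨?_, hp⟩) q' (hsub ⟨?_, hq'S⟩)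
    · rw [Metric.mem_ball]; linarith [dist_triangle p q' q]
    · rw [Metric.mem_ball]; linarith

theorem lemJ (T : ℝ) (hT : 0 < T) (F : ℝ → X → X) (u : ℝ → X)
    (hF : ContDiffOn ℝ 6 (Function.uncurry F) (Set.Icc 0 T ×ˢ (Set.univ : Set X)))
    (hu : ContDiffOn ℝ 7 u (Set.Icc 0 T)) :
    ∃ L ≥ (0 : ℝ), ∃ ε > (0 : ℝ), ∀ t ∈ Set.Icc 0 T, ∀ s ∈ Set.Icc 0 T, ∀ z z' : X, ∀ r < ε,
      |s - t| ≤ r → ‖z - u t‖ ≤ r → ‖z' - u t‖ ≤ r →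
      ‖F s z - F s z' - Jop T F u t (z - z')‖ ≤ L * r * ‖z - z'‖ := by
  obtain ⟨L, hL, ε, hε, h⟩ := lipD T hT F u hF hu
  refine ⟨L, hL, ε, hε, ?_⟩
  intro t ht s hs z z' r hr hst hz hz'
  have := (convex_closedBall (u t) r).norm_image_sub_le_of_norm_hasFDerivWithin_le'
    (f := fun z => F s z) (φ := Jop T F u t) (C := L * r)
    (f' := fun z => (fderivWithin ℝ (Function.uncurry F) (Set.Icc 0 T ×ˢ (Set.univ : Set X)) (s, z)).comp
    (ContinuousLinearMap.inr ℝ ℝ X)) (x := z') (y := z) ?_ ?_ (by simpa [dist_eq_norm] using hz')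
      (by simpa [dist_eq_norm] using hz)
  · exact this
  · intro y hy
    have h1 : DifferentiableWithinAt ℝ (Function.uncurry F) (Set.Icc 0 T ×ˢ (Set.univ : Set X)) (s, y) :=
      hF.differentiableOn (by norm_num) _ ⟨hs, trivial⟩
    have h2 : HasFDerivWithinAt (fun y : X => (s, y)) (ContinuousLinearMap.inr ℝ ℝ X)
        (Metric.closedBall (u t) r) y := (hasFDerivAt_prodMk_right s y).hasFDerivWithinAt
    exact h1.hasFDerivWithinAt.comp y h2 (fun y _ => ⟨hs, trivial⟩)
  · intro y hy
    have hd : dist (s, y) (t, u t) ≤ r := by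
      rw [Prod.dist_eq]; exact max_le hst hy
    have := h t ht (s, y) ⟨hs, trivial⟩ (hd.trans_lt hr)
    rw [Jop, ← ContinuousLinearMap.sub_comp]
    refine (ContinuousLinearMap.opNorm_comp_le _ _).trans ?_
    calc _ ≤ (L * dist (s, y) (t, u t)) * 1 := by
            gcongr
            exact ContinuousLinearMap.norm_inr_le_one ℝ ℝ X
      _ ≤ L * r := by rw [mul_one]; gcongr

theorem lemJ_O (T : ℝ) (hT : 0 < T) (F : ℝ → X → X) (u : ℝ → X)
    (hF : ContDiffOn ℝ 6 (Function.uncurry F) (Set.Icc 0 T ×ˢ (Set.univ : Set X)))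
    (hu : ContDiffOn ℝ 7 u (Set.Icc 0 T)) {l : Filter (ℝ × ℝ)} {a s r : ℝ × ℝ → ℝ}
    {z z' : ℝ × ℝ → X} (hr : Tendsto r l (𝓝 0)) (ha : ∀ᶠ p in l, a p ∈ Set.Icc 0 T)
    (hs : ∀ᶠ p in l, s p ∈ Set.Icc 0 T) (h1 : (fun p => s p - a p) =O[l] r)
    (h2 : (fun p => z p - u (a p)) =O[l] r) (h3 : (fun p => z' p - u (a p)) =O[l] r) :
    (fun p => F (s p) (z p) - F (s p) (z' p) - Jop T F u (a p) (z p - z' p))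
      =O[l] fun p => r p * ‖z p - z' p‖ := by
  obtain ⟨L, hL, ε, hε, h⟩ := lemJ T hT F u hF hu
  obtain ⟨C1, h1⟩ := h1.bound
  obtain ⟨C2, h2⟩ := h2.bound
  obtain ⟨C3, h3⟩ := h3.bound
  set C := max C1 (max C2 C3)
  have hsm : ∀ᶠ p in l, C * ‖r p‖ < ε := by
    have : Tendsto (fun p => C * ‖r p‖) l (𝓝 (C * ‖(0:ℝ)‖)) := (hr.norm).const_mul C
    rw [norm_zero, mul_zero] at this
    exact this.eventually_lt_const hε
  refine IsBigO.of_bound (L * C) ?_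
  filter_upwards [ha, hs, h1, h2, h3, hsm] with p ha hs h1 h2 h3 hsm
  have e1 : C1 * ‖r p‖ ≤ C * ‖r p‖ := by gcongr; exact le_max_left _ _
  have e2 : C2 * ‖r p‖ ≤ C * ‖r p‖ := by gcongr; exact (le_max_left _ _).trans (le_max_right _ _)
  have e3 : C3 * ‖r p‖ ≤ C * ‖r p‖ := by gcongr; exact (le_max_right _ _).trans (le_max_right _ _)
  refine (h _ ha _ hs _ _ _ hsm (h1.trans e1) (h2.trans e2) (h3.trans e3)).trans (le_of_eq ?_)
  rw [norm_mul, norm_norm]; ring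

theorem lip_O (T : ℝ) (F : ℝ → X → X) (μ : ℝ)
    (hLip : ∀ t ∈ Set.Icc 0 T, ∀ x y : X, ‖F t x - F t y‖ ≤ μ * ‖x - y‖)
    {l : Filter (ℝ × ℝ)} {s : ℝ × ℝ → ℝ} {z z' : ℝ × ℝ → X} (hs : ∀ᶠ p in l, s p ∈ Set.Icc 0 T) :
    (fun p => F (s p) (z p) - F (s p) (z' p)) =O[l] fun p => z p - z' p := by
  refine IsBigO.of_bound μ ?_
  filter_upwards [hs] with p hs using hLip _ hs _ _

/-- small step filter -/
def lf (T c : ℝ) : Filter (ℝ × ℝ) :=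
  comap Prod.snd (𝓝 0) ⊓ 𝓟 {p | 0 ≤ p.1 ∧ 0 ≤ p.2 ∧ p.1 + c * p.2 ≤ T}

theorem lf_mem (T c : ℝ) : ∀ᶠ p in lf T c, 0 ≤ p.1 ∧ 0 ≤ p.2 ∧ p.1 + c * p.2 ≤ T :=
  (inf_le_right : lf T c ≤ _) (mem_principal_self _)

theorem lf_snd (T c : ℝ) : Tendsto Prod.snd (lf T c) (𝓝 0) :=
  (tendsto_comap).mono_left inf_le_left

theorem lf_Icc (T : ℝ) {c d : ℝ} (h0 : 0 ≤ d) (hdc : d ≤ c) :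
    ∀ᶠ p in lf T c, p.1 + d * p.2 ∈ Set.Icc 0 T := by
  filter_upwards [lf_mem T c] with p hp
  have := mul_le_mul_of_nonneg_right hdc hp.2.1
  have := mul_nonneg h0 hp.2.1
  constructor <;> linarith [hp.1, hp.2.2]

theorem lf_bound {T c : ℝ} {f : ℝ × ℝ → X} {n : ℕ} (h : f =O[lf T c] fun p => p.2 ^ n) :
    ∃ C > 0, ∃ k0 > 0, ∀ t h : ℝ, 0 ≤ t → 0 ≤ h → t + c * h ≤ T → h ≤ k0 →
      ‖f (t, h)‖ ≤ C * h ^ n := by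
  obtain ⟨C, hC0, hC⟩ := h.exists_pos
  have hC := hC.bound
  rw [lf, eventually_inf_principal, eventually_comap] at hC
  obtain ⟨ε, hε, hb⟩ := Metric.eventually_nhds_iff.1 hC
  refine ⟨C, hC0, ε/2, by positivity, fun t h ht hh hth hk => ?_⟩
  have := hb (y := h) (by rw [Real.dist_eq, sub_zero, abs_of_nonneg hh]; linarith) (t, h) rfl ⟨ht, hh, hth⟩
  simpa [abs_of_nonneg hh] using this

theorem pow_O {T c : ℝ} {m n : ℕ} (h : n ≤ m) :
    (fun p : ℝ × ℝ => p.2 ^ m) =O[lf T c] fun p => p.2 ^ n := by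
  have := ((isBigO_refl (fun p : ℝ × ℝ => p.2 ^ n) (lf T c)).mul
    (((lf_snd T c).pow (m - n)).isBigO_one ℝ))
  simpa [← pow_add, Nat.add_sub_cancel' h] using this


/-- uniform Taylor bounds for a sequence of successive derivatives -/
def TayB {Y : Type*} [NormedAddCommGroup Y] [NormedSpace ℝ Y] (T : ℝ) (U : ℕ → ℝ → Y) (n : ℕ) : Prop :=
  ∃ M : ℝ, ∀ i m : ℕ, i + m ≤ n → ∀ t ∈ Set.Icc 0 T, ∀ h : ℝ, 0 ≤ h → t + h ∈ Set.Icc 0 T →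
    ‖U i (t + h) - ∑ j ∈ range m, (h ^ j / (j.factorial : ℝ)) • U (i + j) t‖ ≤ M * h ^ m

theorem exists_TayB {Y : Type*} [NormedAddCommGroup Y] [NormedSpace ℝ Y] [CompleteSpace Y] (T : ℝ) (hT : 0 < T)
    (n : ℕ) (f : ℝ → Y) (hf : ContDiffOn ℝ n f (Set.Icc 0 T)) :
    ∃ U : ℕ → ℝ → Y, U 0 = f ∧ (∀ j m : ℕ, j + m = n → ContDiffOn ℝ m (U j) (Set.Icc 0 T)) ∧
      (∀ t ∈ Set.Icc 0 T, derivWithin f (Set.Icc 0 T) t = U 1 t) ∧ TayB T U n := by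
  obtain ⟨U, h0, h1, h2, M, h3⟩ := taylor_dir (Set.Icc 0 T) (uniqueDiffOn_Icc hT) (convex_Icc 0 T)
    isCompact_Icc (1 : ℝ) n f hf
  refine ⟨U, h0, h1, fun t ht => ?_, M, ?_⟩
  · rw [← h2 t ht]; rfl
  · intro i m him t ht h hh hth
    have := h3 i m him t ht h hh (by simpa using hth)
    simpa using this

theorem TayB.isBigO {Y : Type*} [NormedAddCommGroup Y] [NormedSpace ℝ Y] {T : ℝ} {U : ℕ → ℝ → Y}
    {n : ℕ} (hU : TayB T U n) (i m : ℕ) (him : i + m ≤ n) {c : ℝ} (d : ℝ) (h0 : 0 ≤ d) (hdc : d ≤ c) :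
    (fun p : ℝ × ℝ => U i (p.1 + d * p.2)
      - ∑ j ∈ range m, ((d * p.2) ^ j / (j.factorial : ℝ)) • U (i + j) p.1)
      =O[lf T c] fun p => p.2 ^ m := by
  obtain ⟨M, hM⟩ := hU
  refine IsBigO.of_bound (M * d ^ m) ?_
  filter_upwards [lf_mem T c, lf_Icc T h0 hdc, lf_Icc T le_rfl (h0.trans hdc)] with p hp h1 h2
  refine (hM i m him p.1 (by simpa using h2) (d * p.2) (mul_nonneg h0 hp.2.1) h1).trans (le_of_eq ?_)
  rw [norm_pow, Real.norm_of_nonneg hp.2.1]; ring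

theorem u_taylor (T : ℝ) (hT : 0 < T) (F : ℝ → X → X) (u : ℝ → X)
    (hu : ContDiffOn ℝ 7 u (Set.Icc 0 T))
    (hode : ∀ t ∈ Set.Icc 0 T, HasDerivAt u (F t (u t)) t) :
    ∃ U : ℕ → ℝ → X, U 0 = u ∧ (∀ t, U 1 t = F t (u t)) ∧
      (∀ j m : ℕ, j + m = 7 → ContDiffOn ℝ m (U j) (Set.Icc 0 T)) ∧ TayB T U 7 := by
  obtain ⟨U, h0, h1, h2, M, h3⟩ := exists_TayB T hT 7 u (by exact_mod_cast hu)
  have heq : ∀ j, ∀ t ∈ Set.Icc 0 T,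
      Function.update U 1 (fun t => F t (u t)) j t = U j t := by
    intro j t ht
    by_cases hj : j = 1
    · subst hj
      rw [Function.update_self, ← h2 t ht]
      exact ((hode t ht).hasDerivWithinAt.derivWithin (uniqueDiffOn_Icc hT t ht)).symm
    · rw [Function.update_of_ne hj]
  refine ⟨Function.update U 1 (fun t => F t (u t)), ?_, ?_, ?_, M, ?_⟩
  · rw [Function.update_of_ne (by norm_num), h0]
  · intro t; rw [Function.update_self]
  · intro j m hjm
    exact (h1 j m hjm).congr (heq j)
  · intro i m him t ht h hh hth
    rw [heq i _ hth]
    simp only [heq _ t ht]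
    exact h3 i m him t ht h hh hth

theorem snd_smul_O {T c : ℝ} {f : ℝ × ℝ → X} {n : ℕ} (h : f =O[lf T c] fun p => p.2 ^ n) (a : ℝ) :
    (fun p => (a * p.2) • f p) =O[lf T c] fun p => p.2 ^ (n + 1) := by
  have h1 : (fun p : ℝ × ℝ => a * p.2) =O[lf T c] fun p => p.2 := 
    (isBigO_refl _ _).const_mul_left a
  have := h1.smul h
  refine this.congr_right fun p => ?_
  rw [smul_eq_mul, pow_succ]; ring

theorem J_bdd (T : ℝ) (hT : 0 < T) (F : ℝ → X → X) (u : ℝ → X)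
    (hF : ContDiffOn ℝ 6 (Function.uncurry F) (Set.Icc 0 T ×ˢ (Set.univ : Set X)))
    (hu : ContDiffOn ℝ 7 u (Set.Icc 0 T)) : 
    ContDiffOn ℝ 1 (Jop T F u) (Set.Icc 0 T) := by
  have h1 : ContDiffOn ℝ 1 (fderivWithin ℝ (Function.uncurry F) (Set.Icc 0 T ×ˢ (Set.univ : Set X)))
    (Set.Icc 0 T ×ˢ (Set.univ : Set X)) := hF.fderivWithin (uds T hT) (by norm_num)
  have h2 : ContDiffOn ℝ 1 (fun t => (t, u t)) (Set.Icc 0 T) :=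
    contDiffOn_id.prodMk (hu.of_le (by norm_num))
  have h3 := h1.comp h2 (fun t ht => ⟨ht, trivial⟩)
  exact h3.clm_comp contDiffOn_const

theorem J_apply_O (T : ℝ) (hT : 0 < T) (F : ℝ → X → X) (u : ℝ → X)
    (hF : ContDiffOn ℝ 6 (Function.uncurry F) (Set.Icc 0 T ×ˢ (Set.univ : Set X)))
    (hu : ContDiffOn ℝ 7 u (Set.Icc 0 T)) {c d : ℝ} (h0 : 0 ≤ d) (hdc : d ≤ c)
    {f : ℝ × ℝ → X} {n : ℕ} (h : f =O[lf T c] fun p => p.2 ^ n) :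
    (fun p => Jop T F u (p.1 + d * p.2) (f p)) =O[lf T c] fun p => p.2 ^ n := by
  obtain ⟨C, hC⟩ := isCompact_Icc.exists_bound_of_continuousOn (J_bdd T hT F u hF hu).continuousOn
  refine IsBigO.trans (IsBigO.of_bound C ?_) h
  filter_upwards [lf_Icc T h0 hdc] with p hp
  exact (ContinuousLinearMap.le_opNorm _ _).trans (mul_le_mul_of_nonneg_right (hC _ hp) (norm_nonneg _))

theorem J_diff_O (T : ℝ) (hT : 0 < T) (F : ℝ → X → X) (u : ℝ → X)
    (hF : ContDiffOn ℝ 6 (Function.uncurry F) (Set.Icc 0 T ×ˢ (Set.univ : Set X)))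
    (hu : ContDiffOn ℝ 7 u (Set.Icc 0 T)) {c d : ℝ} (h0 : 0 ≤ d) (hdc : d ≤ c)
    {f : ℝ × ℝ → X} {n : ℕ} (h : f =O[lf T c] fun p => p.2 ^ n) :
    (fun p => Jop T F u (p.1 + d * p.2) (f p) - Jop T F u p.1 (f p)) 
      =O[lf T c] fun p => p.2 ^ (n + 1) := by
  obtain ⟨U, hU0, -, -, hU⟩ := exists_TayB T hT 1 _ (J_bdd T hT F u hF hu)
  have h1 := hU.isBigO 0 1 le_rfl d h0 hdc
  simp only [hU0, sum_range_succ, range_zero, sum_empty, zero_add, pow_zero, Nat.factorial_zero, 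
    Nat.cast_one, div_one, one_smul, pow_one, add_zero] at h1
  have h2 := h1.norm_norm.mul h.norm_norm
  have h3 : (fun p : ℝ × ℝ => ‖p.2‖ * ‖p.2 ^ n‖) =O[lf T c] fun p => p.2 ^ (n + 1) := by
    refine IsBigO.of_bound 1 (Eventually.of_forall fun p => ?_)
    rw [one_mul, norm_mul, norm_norm, norm_norm, ← norm_mul, pow_succ']
  refine IsBigO.trans (IsBigO.of_bound 1 (Eventually.of_forall fun p => ?_)) (h2.trans h3)
  rw [one_mul, ← sub_apply, norm_mul, norm_norm, norm_norm]
  exact ContinuousLinearMap.le_opNorm _ _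


theorem rk4_order (T : ℝ) (hT : 0 < T) (F : ℝ → X → X) (μ : ℝ)
    (hF : ContDiffOn ℝ 6 (Function.uncurry F) (Set.Icc 0 T ×ˢ (Set.univ : Set X)))
    (hLip : ∀ t ∈ Set.Icc 0 T, ∀ x y : X, ‖F t x - F t y‖ ≤ μ * ‖x - y‖)
    (u : ℝ → X) (hu : ContDiffOn ℝ 7 u (Set.Icc 0 T))
    (hode : ∀ t ∈ Set.Icc 0 T, HasDerivAt u (F t (u t)) t) :
    (fun p : ℝ × ℝ => rk4Step F p.1 p.2 (u p.1) - u (p.1 + 1 * p.2)) =O[lf T 1] fun p => p.2 ^ 5 := by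
  obtain ⟨U, hU0, hU1, -, hU⟩ := u_taylor T hT F u hu hode
  have t0 := fun (m : ℕ) (hm : 0 + m ≤ 7) => hU.isBigO 0 m hm (c := 1) (1/2) (by norm_num) (by norm_num)
  have t1 := fun (m : ℕ) (hm : 1 + m ≤ 7) => hU.isBigO 1 m hm (c := 1) (1/2) (by norm_num) (by norm_num)
  have s0 := fun (m : ℕ) (hm : 0 + m ≤ 7) => hU.isBigO 0 m hm (c := 1) 1 (by norm_num) (by norm_num)
  have s1 := fun (m : ℕ) (hm : 1 + m ≤ 7) => hU.isBigO 1 m hm (c := 1) 1 (by norm_num) (by norm_num)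
  rw [hU0] at t0 s0
  simp only [zero_add] at t0 s0
  have mh : ∀ᶠ p in lf T 1, p.1 + (1/2) * p.2 ∈ Set.Icc 0 T := lf_Icc T (by norm_num) (by norm_num)
  have m1 : ∀ᶠ p in lf T 1, p.1 + 1 * p.2 ∈ Set.Icc 0 T := lf_Icc T (by norm_num) (by norm_num)
  set K2 : ℝ × ℝ → X := fun p => F (p.1 + (1/2) * p.2) (u p.1 + ((1/2) * p.2) • U 1 p.1) with hK2
  set K3 : ℝ × ℝ → X := fun p => F (p.1 + (1/2) * p.2) (u p.1 + ((1/2) * p.2) • K2 p) with hK3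
  set K4 : ℝ × ℝ → X := fun p => F (p.1 + 1 * p.2) (u p.1 + (1 * p.2) • K3 p) with hK4
  -- Y2
  have a1 : (fun p : ℝ × ℝ => u p.1 + ((1/2) * p.2) • U 1 p.1 - u (p.1 + (1/2) * p.2))
      =O[lf T 1] fun p => p.2 ^ 2 := by
    refine (t0 2 (by norm_num)).neg_left.congr_left fun p => ?_
    simp only [sum_range_succ, range_zero, sum_empty, hU0]
    simp only [Nat.factorial]
    module
  have a2 : (fun p : ℝ × ℝ => K2 p - U 1 (p.1 + (1/2) * p.2)) =O[lf T 1] fun p => p.2 ^ 2 := by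
    simp only [hU1 (_ + _)]
    exact (lip_O T F μ hLip mh).trans a1
  -- Y3
  have b1 : (fun p : ℝ × ℝ => u p.1 + ((1/2) * p.2) • K2 p - u (p.1 + (1/2) * p.2))
      =O[lf T 1] fun p => p.2 ^ 2 := by
    refine ((((snd_smul_O a2 (1/2)).trans (pow_O (by norm_num : 2 ≤ 3))).add 
      (snd_smul_O (t1 1 (by norm_num)) (1/2))).sub (t0 2 (by norm_num))).congr_left fun p => ?_
    simp only [sum_range_succ, range_zero, sum_empty, hU0]
    simp only [Nat.factorial]
    module
  have b2 : (fun p : ℝ × ℝ => K3 p - U 1 (p.1 + (1/2) * p.2)) =O[lf T 1] fun p => p.2 ^ 2 := by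
    simp only [hU1 (_ + _)]
    exact (lip_O T F μ hLip mh).trans b1
  -- Z
  set Z : ℝ × ℝ → X := fun p => (u p.1 + ((1/2) * p.2) • U 1 p.1 - u (p.1 + (1/2) * p.2))
    + (u p.1 + ((1/2) * p.2) • K2 p - u (p.1 + (1/2) * p.2)) with hZ
  have z1 : Z =O[lf T 1] fun p => p.2 ^ 3 := by
    refine (((snd_smul_O a2 (1/2)).add (snd_smul_O (t1 2 (by norm_num)) (1/2))).sub 
      ((t0 3 (by norm_num)).const_smul_left (2:ℝ))).congr_left fun p => ?_
    simp only [sum_range_succ, range_zero, sum_empty, hU0, hZ, Pi.smul_apply]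
    simp only [Nat.factorial]
    module
  have hr2 : Tendsto (fun p : ℝ × ℝ => p.2 ^ 2) (lf T 1) (𝓝 0) := by
    simpa using (lf_snd T 1).pow 2
  have hJh : ∀ z : ℝ × ℝ → X, 
      (fun p : ℝ × ℝ => z p - u (p.1 + (1/2) * p.2)) =O[lf T 1] (fun p => p.2 ^ 2) →
      (fun p : ℝ × ℝ => F (p.1 + (1/2) * p.2) (z p) - U 1 (p.1 + (1/2) * p.2) 
        - Jop T F u (p.1 + (1/2) * p.2) (z p - u (p.1 + (1/2) * p.2))) =O[lf T 1] fun p => p.2 ^ 4 := by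
    intro z hz
    simp only [hU1 (_ + _)]
    refine (lemJ_O T hT F u hF hu hr2 mh mh ?_ hz ?_).trans ?_
    · simpa using isBigO_zero _ _
    · simpa using isBigO_zero _ _
    · refine ((isBigO_refl (fun p : ℝ × ℝ => p.2 ^ 2) _).mul hz.norm_left).congr_right fun p => ?_
      ring
  have c1 : (fun p : ℝ × ℝ => K2 p + K3 p - (2:ℝ) • U 1 (p.1 + (1/2) * p.2) 
      - Jop T F u (p.1 + (1/2) * p.2) (Z p)) =O[lf T 1] fun p => p.2 ^ 4 := by
    refine ((hJh _ a1).add (hJh _ b1)).congr_left fun p => ?_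
    simp only [hZ, map_add, hK3, hK2]
    module
  have c2 : (fun p : ℝ × ℝ => K2 p + K3 p - (2:ℝ) • U 1 (p.1 + (1/2) * p.2))
      =O[lf T 1] fun p => p.2 ^ 3 := by
    refine ((c1.trans (pow_O (by norm_num : 3 ≤ 4))).add (J_apply_O T hT F u hF hu (d := 1/2) (by norm_num)
      (by norm_num) z1)).congr_left fun p => ?_
    module
  set W : ℝ × ℝ → X := fun p => u p.1 + (1 * p.2) • K3 p - u (p.1 + 1 * p.2) with hW
  have d1 : (fun p => W p + (2:ℝ) • Z p) =O[lf T 1] fun p => p.2 ^ 4 := by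
    refine ((((snd_smul_O c2 1).add (snd_smul_O (t1 3 (by norm_num)) 2)).sub 
      ((t0 4 (by norm_num)).const_smul_left (4:ℝ))).sub (s0 4 (by norm_num))).congr_left fun p => ?_
    simp only [sum_range_succ, range_zero, sum_empty, hU0, hZ, hW, Pi.smul_apply]
    simp only [Nat.factorial]
    module
  have d2 : W =O[lf T 1] fun p => p.2 ^ 3 := by
    refine ((d1.trans (pow_O (by norm_num : 3 ≤ 4))).sub (z1.const_smul_left (2:ℝ))).congr_left 
      fun p => ?_
    simp only [Pi.smul_apply]
    module
  have e1 : (fun p : ℝ × ℝ => K4 p - U 1 (p.1 + 1 * p.2) - Jop T F u (p.1 + 1 * p.2) (W p)) 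
      =O[lf T 1] fun p => p.2 ^ 4 := by
    have hz := d2.trans (pow_O (by norm_num : 2 ≤ 3))
    simp only [hU1 (_ + _)]
    refine (lemJ_O T hT F u hF hu hr2 m1 m1 ?_ hz ?_).trans ?_
    · simpa using isBigO_zero _ _
    · simpa using isBigO_zero _ _
    · refine ((isBigO_refl (fun p : ℝ × ℝ => p.2 ^ 2) _).mul hz.norm_left).congr_right fun p => ?_
      ring
  have e2 : (fun p : ℝ × ℝ => (2:ℝ) • K2 p + (2:ℝ) • K3 p + K4 p - (4:ℝ) • U 1 (p.1 + (1/2) * p.2) 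
      - U 1 (p.1 + 1 * p.2)) =O[lf T 1] fun p => p.2 ^ 4 := by
    have x1 := J_diff_O T hT F u hF hu (c := 1) (d := 1/2) (by norm_num) (by norm_num) z1
    have x2 := J_diff_O T hT F u hF hu (c := 1) (d := 1) (by norm_num) (by norm_num) z1
    have x3 := J_apply_O T hT F u hF hu (c := 1) (d := 1) (by norm_num) (by norm_num) d1
    refine (((((c1.const_smul_left (2:ℝ)).add e1).add x3).add (x1.const_smul_left (2:ℝ))).sub 
      (x2.const_smul_left (2:ℝ))).congr_left fun p => ?_
    simp only [Pi.smul_apply, map_add, map_smul]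
    module
  have f1 : (fun p : ℝ × ℝ => u p.1 + ((1/6) * p.2) • (U 1 p.1 + (4:ℝ) • U 1 (p.1 + (1/2) * p.2) 
      + U 1 (p.1 + 1 * p.2)) - u (p.1 + 1 * p.2)) =O[lf T 1] fun p => p.2 ^ 5 := by
    refine (((snd_smul_O (t1 4 (by norm_num)) (4/6)).add (snd_smul_O (s1 4 (by norm_num)) (1/6))).sub 
      (s0 5 (by norm_num))).congr_left fun p => ?_
    simp only [sum_range_succ, range_zero, sum_empty, hU0]
    simp only [Nat.factorial]
    module
  refine (f1.add (snd_smul_O e2 (1/6))).congr_left fun p => ?_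
  have hh : p.2 / 2 = (1/2) * p.2 := by ring
  have h6 : p.2 / 6 = (1/6) * p.2 := by ring
  have : rk4Step F p.1 p.2 (u p.1) = u p.1 + ((1/6) * p.2) • (U 1 p.1 + (2:ℝ) • K2 p 
      + (2:ℝ) • K3 p + K4 p) := by
    simp only [rk4Step, hK4, hK3, hK2, hh, h6, hU1, one_mul]
  rw [this]
  module


/-- triangle of admissible (time, step) pairs -/
def Tri (T : ℝ) : Set (ℝ × ℝ) := {p | 0 ≤ p.1 ∧ 0 ≤ p.2 ∧ p.1 + p.2 ≤ T}

theorem Tri_convex (T : ℝ) : Convex ℝ (Tri T) := by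
  rintro ⟨a, b⟩ ⟨h1, h2, h3⟩ ⟨a', b'⟩ ⟨h1', h2', h3'⟩ x y hx hy hxy
  simp only [Tri, Set.mem_ofPred_eq, Prod.smul_mk, Prod.mk_add_mk, smul_eq_mul] at *
  refine ⟨by positivity, by positivity, ?_⟩
  calc x * a + y * a' + (x * b + y * b') = x * (a + b) + y * (a' + b') := by ring
    _ ≤ x * T + y * T := by gcongr
    _ = T := by rw [← add_mul, hxy, one_mul]

theorem Tri_compact (T : ℝ) : IsCompact (Tri T) := by
  have hc : IsClosed (Tri T) := by
    refine (isClosed_le continuous_const continuous_fst).inter 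
      ((isClosed_le continuous_const continuous_snd).inter
        (isClosed_le (continuous_fst.add continuous_snd) continuous_const))
  refine IsCompact.of_isClosed_subset (isCompact_Icc.prod isCompact_Icc) hc
    (s := Set.Icc 0 T ×ˢ Set.Icc 0 T) ?_
  rintro p ⟨h1, h2, h3⟩
  exact ⟨⟨h1, by linarith⟩, ⟨h2, by linarith⟩⟩

theorem Tri_ud (T : ℝ) (hT : 0 < T) : UniqueDiffOn ℝ (Tri T) := by
  refine uniqueDiffOn_convex (Tri_convex T) ?_
  have ho : IsOpen {p : ℝ × ℝ | 0 < p.1 ∧ 0 < p.2 ∧ p.1 + p.2 < T} :=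
    (isOpen_lt continuous_const continuous_fst).inter 
      ((isOpen_lt continuous_const continuous_snd).inter
        (isOpen_lt (continuous_fst.add continuous_snd) continuous_const))
  refine ⟨(T/3, T/3), mem_interior.2 ⟨_, ?_, ho, ?_⟩⟩
  · rintro p ⟨h1, h2, h3⟩; exact ⟨h1.le, h2.le, h3.le⟩
  · refine ⟨?_, ?_, ?_⟩ <;> simp <;> linarith

theorem F_comp (T : ℝ) (F : ℝ → X → X)
    (hF : ContDiffOn ℝ 6 (Function.uncurry F) (Set.Icc 0 T ×ˢ (Set.univ : Set X))) 
    {s : ℝ × ℝ → ℝ} {z : ℝ × ℝ → X} (hs : ContDiffOn ℝ 6 s (Tri T)) (hz : ContDiffOn ℝ 6 z (Tri T))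
    (hm : ∀ p ∈ Tri T, s p ∈ Set.Icc 0 T) : ContDiffOn ℝ 6 (fun p => F (s p) (z p)) (Tri T) :=
  hF.comp (hs.prodMk hz) (fun p hp => ⟨hm p hp, trivial⟩)

theorem rk4_g (T : ℝ) (F : ℝ → X → X) 
    (hF : ContDiffOn ℝ 6 (Function.uncurry F) (Set.Icc 0 T ×ˢ (Set.univ : Set X)))
    (u : ℝ → X) (hu : ContDiffOn ℝ 7 u (Set.Icc 0 T)) :
    ∃ g : ℝ × ℝ → X, ContDiffOn ℝ 6 g (Tri T) ∧ 
      ∀ p, rk4Step F p.1 p.2 (u p.1) = u p.1 + p.2 • g p := by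
  have m0 : ∀ p ∈ Tri T, p.1 ∈ Set.Icc 0 T := fun p hp => ⟨hp.1, by linarith [hp.2.1, hp.2.2]⟩
  have mh : ∀ p ∈ Tri T, p.1 + p.2/2 ∈ Set.Icc 0 T := 
    fun p hp => ⟨by linarith [hp.1, hp.2.1], by linarith [hp.2.1, hp.2.2]⟩
  have m1 : ∀ p ∈ Tri T, p.1 + p.2 ∈ Set.Icc 0 T := 
    fun p hp => ⟨by linarith [hp.1, hp.2.1], hp.2.2⟩
  have c1 : ContDiffOn ℝ 6 (fun p : ℝ × ℝ => p.1) (Tri T) := contDiff_fst.contDiffOn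
  have c2 : ContDiffOn ℝ 6 (fun p : ℝ × ℝ => p.2) (Tri T) := contDiff_snd.contDiffOn
  have c3 : ContDiffOn ℝ 6 (fun p : ℝ × ℝ => p.2/2) (Tri T) := c2.div_const 2
  have cu : ContDiffOn ℝ 6 (fun p : ℝ × ℝ => u p.1) (Tri T) := 
    (hu.of_le (by norm_num)).comp c1 m0
  have k1 := F_comp T F hF c1 cu m0
  have k2 := F_comp T F hF (c1.add c3) (cu.add (c3.smul k1)) mh
  have k3 := F_comp T F hF (c1.add c3) (cu.add (c3.smul k2)) mh
  have k4 := F_comp T F hF (c1.add c2) (cu.add (c2.smul k3)) m1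
  refine ⟨_, (contDiffOn_const (c := (1/6 : ℝ))).smul (((k1.add ((contDiffOn_const (c := (2 : ℝ))).smul k2)).add 
    ((contDiffOn_const (c := (2 : ℝ))).smul k3)).add k4), ?_⟩
  intro p
  simp only [rk4Step, Pi.add_apply, Pi.smul_apply', Pi.smul_apply]
  module

theorem rk4_expand (T : ℝ) (hT : 0 < T) (F : ℝ → X → X) (μ : ℝ)
    (hF : ContDiffOn ℝ 6 (Function.uncurry F) (Set.Icc 0 T ×ˢ (Set.univ : Set X)))
    (hLip : ∀ t ∈ Set.Icc 0 T, ∀ x y : X, ‖F t x - F t y‖ ≤ μ * ‖x - y‖)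
    (u : ℝ → X) (hu : ContDiffOn ℝ 7 u (Set.Icc 0 T))
    (hode : ∀ t ∈ Set.Icc 0 T, HasDerivAt u (F t (u t)) t) :
    ∃ c4 c5 : ℝ → X, ContDiffOn ℝ 2 c4 (Set.Icc 0 T) ∧ ContDiffOn ℝ 1 c5 (Set.Icc 0 T) ∧
    (fun p : ℝ × ℝ => rk4Step F p.1 p.2 (u p.1) - u (p.1 + 1 * p.2) 
      - (p.2 ^ 5 • c4 p.1 + p.2 ^ 6 • c5 p.1)) =O[lf T 1] fun p => p.2 ^ 7 := by
  have hord := rk4_order T hT F μ hF hLip u hu hode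
  obtain ⟨g, hg, hgr⟩ := rk4_g T F hF u hu
  obtain ⟨U, hU0, hU1, hUr, hU⟩ := u_taylor T hT F u hu hode
  obtain ⟨G, hG0, hGr, -, M, hM⟩ := taylor_dir (Tri T) (Tri_ud T hT) (Tri_convex T) (Tri_compact T) 
    ((0, 1) : ℝ × ℝ) 6 g hg
  have hGO : (fun p : ℝ × ℝ => g p - ∑ j ∈ range 6, (p.2 ^ j / (j.factorial : ℝ)) • G j (p.1, 0)) 
      =O[lf T 1] fun p => p.2 ^ 6 := by
    refine IsBigO.of_bound M ?_
    filter_upwards [lf_mem T 1] with p hp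
    have := hM 0 6 (by norm_num) (p.1, 0) ⟨hp.1, le_rfl, by simp; linarith [hp.2.1, hp.2.2]⟩ p.2 hp.2.1
      ⟨by simpa using hp.1, by simpa using hp.2.1, by simpa using hp.2.2⟩
    simp only [hG0, zero_add, Prod.smul_mk, smul_zero, smul_eq_mul, mul_one, Prod.mk_add_mk, add_zero, mul_zero] at this
    rw [norm_pow, Real.norm_of_nonneg hp.2.1]
    exact this
  have hUO := hU.isBigO 0 7 (by norm_num) (c := 1) 1 (by norm_num) (by norm_num)
  set c : ℕ → ℝ → X := fun j t => (1 / (j.factorial : ℝ)) • G j (t, 0) - 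
    (1 / ((j+1).factorial : ℝ)) • U (j+1) t with hc
  have hcr : ∀ j m : ℕ, j + m = 6 → ContDiffOn ℝ m (c j) (Set.Icc 0 T) := by
    intro j m hjm
    have h1 : ContDiffOn ℝ m (fun t : ℝ => G j (t, 0)) (Set.Icc 0 T) := 
      (hGr j m hjm).comp (contDiffOn_id.prodMk contDiffOn_const) 
        (fun t ht => ⟨ht.1, le_rfl, by simpa using ht.2⟩)
    exact ((contDiffOn_const (c := (1 / (j.factorial : ℝ)))).smul h1).sub 
      ((contDiffOn_const (c := (1 / ((j+1).factorial : ℝ)))).smul (hUr (j+1) m (by omega)))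
  have hfull : (fun p : ℝ × ℝ => rk4Step F p.1 p.2 (u p.1) - u (p.1 + 1 * p.2) 
      - p.2 • ∑ j ∈ range 6, p.2 ^ j • c j p.1) =O[lf T 1] fun p => p.2 ^ 7 := by
    refine ((snd_smul_O hGO 1).sub hUO).congr_left fun p => ?_
    simp only [hgr, hc, sum_range_succ, range_zero, sum_empty, hU0, zero_add]
    simp only [Nat.factorial]
    module
  have hbdd : ∀ j ≤ 6, (fun p : ℝ × ℝ => c j p.1) =O[lf T 1] fun p => p.2 ^ 0 := by
    intro j hj
    obtain ⟨C, hC⟩ := isCompact_Icc.exists_bound_of_continuousOn (hcr j (6 - j) (by omega)).continuousOn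
    refine IsBigO.of_bound C ?_
    filter_upwards [lf_Icc T (c := 1) le_rfl (by norm_num)] with p hp
    simpa using hC p.1 (by simpa using hp)
  have hpw : ∀ j ≤ 6, ∀ m : ℕ, (fun p : ℝ × ℝ => p.2 ^ m • c j p.1) =O[lf T 1] fun p => p.2 ^ m := by
    intro j hj m
    refine ((isBigO_refl (fun p : ℝ × ℝ => p.2 ^ m) _).smul (hbdd j hj)).congr_right fun p => ?_
    simp
  have hlow : (fun p : ℝ × ℝ => p.2 • ∑ j ∈ range 4, p.2 ^ j • c j p.1) =O[lf T 1] fun p => p.2 ^ 5 := by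
    refine (((hord.sub (hfull.trans (pow_O (by norm_num : 5 ≤ 7)))).sub (hpw 4 (by norm_num) 5)).sub 
      ((hpw 5 (by norm_num) 6).trans (pow_O (by norm_num : 5 ≤ 6)))).congr_left fun p => ?_
    simp only [sum_range_succ, range_zero, sum_empty]
    module
  obtain ⟨C, hC, k0, hk0, hlow⟩ := lf_bound hlow
  have hzero : ∀ t, 0 ≤ t → t < T → ∀ j < 4, c j t = 0 := by
    intro t ht htT
    refine coeff_zero (min k0 (T - t)) (lt_min hk0 (by linarith)) 4 (fun j => c j t) C ?_
    intro h hh hl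
    have := hlow t h ht hh.le (by linarith [hl.trans (min_le_right _ _)]) (hl.trans (min_le_left _ _))
    simp only [norm_smul, Real.norm_of_nonneg hh.le] at this
    refine le_of_mul_le_mul_left (a := h) ?_ hh
    calc _ ≤ _ := this
      _ = _ := by ring
  refine ⟨c 4, c 5, hcr 4 2 rfl, hcr 5 1 rfl, ?_⟩
  refine hfull.congr' ?_ EventuallyEq.rfl
  filter_upwards [lf_mem T 1] with p hp
  rcases hp.2.1.eq_or_lt with h0 | h0
  · simp [← h0]
  · have hz := hzero p.1 hp.1 (by linarith [hp.2.2])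
    simp only [sum_range_succ, range_zero, sum_empty, hz 0 (by norm_num), hz 1 (by norm_num), 
      hz 2 (by norm_num), hz 3 (by norm_num)]
    module


theorem lf_shift (T : ℝ) {c d : ℝ} (h0 : 0 ≤ d) (hdc : d + 1 ≤ c) :
    Tendsto (fun p : ℝ × ℝ => (p.1 + d * p.2, p.2)) (lf T c) (lf T 1) := by
  refine tendsto_inf.2 ⟨tendsto_comap_iff.2 (lf_snd T c), tendsto_principal.2 ?_⟩
  filter_upwards [lf_mem T c] with p hp
  have := mul_le_mul_of_nonneg_right hdc hp.2.1
  have := mul_nonneg h0 hp.2.1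
  refine ⟨?_, hp.2.1, ?_⟩
  · show 0 ≤ p.1 + d * p.2
    linarith [hp.1]
  · show p.1 + d * p.2 + 1 * p.2 ≤ T
    linarith [hp.2.2]

theorem pow_smul_O {T c : ℝ} {f : ℝ × ℝ → X} {n : ℕ} (h : f =O[lf T c] fun p => p.2 ^ n) (m : ℕ) :
    (fun p => p.2 ^ m • f p) =O[lf T c] fun p => p.2 ^ (m + n) := by
  refine ((isBigO_refl (fun p : ℝ × ℝ => p.2 ^ m) _).smul h).congr_right fun p => ?_
  rw [smul_eq_mul, pow_add]

theorem cont_O {T c d : ℝ} (h0 : 0 ≤ d) (hdc : d ≤ c) {f : ℝ → X} (hf : ContinuousOn f (Set.Icc 0 T)) :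
    (fun p : ℝ × ℝ => f (p.1 + d * p.2)) =O[lf T c] fun p => p.2 ^ 0 := by
  obtain ⟨C, hC⟩ := isCompact_Icc.exists_bound_of_continuousOn hf
  refine IsBigO.of_bound C ?_
  filter_upwards [lf_Icc T h0 hdc] with p hp
  simpa using hC _ hp

/-- local error of RK4 -/
noncomputable def dl (F : ℝ → X → X) (u : ℝ → X) (p : ℝ × ℝ) : X :=
  rk4Step F p.1 p.2 (u p.1) - u (p.1 + 1 * p.2)

theorem dl_shift (T : ℝ) (hT : 0 < T) (F : ℝ → X → X) (μ : ℝ)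
    (hF : ContDiffOn ℝ 6 (Function.uncurry F) (Set.Icc 0 T ×ˢ (Set.univ : Set X)))
    (hLip : ∀ t ∈ Set.Icc 0 T, ∀ x y : X, ‖F t x - F t y‖ ≤ μ * ‖x - y‖)
    (u : ℝ → X) (hu : ContDiffOn ℝ 7 u (Set.Icc 0 T))
    (hode : ∀ t ∈ Set.Icc 0 T, HasDerivAt u (F t (u t)) t) :
    ∃ R : ℝ × ℝ → X, R =O[lf T 5] (fun p => p.2 ^ 6) ∧ ∀ d : ℝ, 0 ≤ d → d ≤ 4 →
      (fun p : ℝ × ℝ => dl F u (p.1 + d * p.2, p.2) - dl F u p - d • R p) =O[lf T 5] fun p => p.2 ^ 7 := by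
  obtain ⟨c4, c5, h4, h5, hex⟩ := rk4_expand T hT F μ hF hLip u hu hode
  obtain ⟨V, hV0, hVr, -, hV⟩ := exists_TayB T hT 2 c4 h4
  obtain ⟨W, hW0, -, -, hW⟩ := exists_TayB T hT 1 c5 h5
  refine ⟨fun p => p.2 ^ 6 • V 1 (p.1 + 0 * p.2), ?_, ?_⟩
  · exact pow_smul_O (cont_O le_rfl (by norm_num) (hVr 1 1 rfl).continuousOn) 6
  · intro d h0 hd
    have e1 := hex.comp_tendsto (lf_shift T (c := 5) h0 (by linarith))
    have e2 := hex.comp_tendsto (lf_shift T (c := 5) le_rfl (by norm_num))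
    have e3 := pow_smul_O (hV.isBigO 0 2 (by norm_num) (c := 5) d h0 (by linarith)) 5
    have e4 := pow_smul_O (hW.isBigO 0 1 (by norm_num) (c := 5) d h0 (by linarith)) 6
    refine (((e1.sub e2).add e3).add e4).congr_left fun p => ?_
    simp only [dl, Function.comp, zero_mul, add_zero, sum_range_succ, range_zero, sum_empty, hV0, hW0, zero_add]
    simp only [Nat.factorial]
    module

theorem step_diff (T : ℝ) (hT : 0 < T) (F : ℝ → X → X) (μ : ℝ)
    (hF : ContDiffOn ℝ 6 (Function.uncurry F) (Set.Icc 0 T ×ˢ (Set.univ : Set X)))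
    (hLip : ∀ t ∈ Set.Icc 0 T, ∀ x y : X, ‖F t x - F t y‖ ≤ μ * ‖x - y‖)
    (u : ℝ → X) (hu : ContDiffOn ℝ 7 u (Set.Icc 0 T))
    (hode : ∀ t ∈ Set.Icc 0 T, HasDerivAt u (F t (u t)) t) (d : ℝ) (h0 : 0 ≤ d) (hd : d ≤ 4)
    (e : ℝ × ℝ → X) (he : e =O[lf T 5] fun p => p.2 ^ 5) :
    (fun p : ℝ × ℝ => rk4Step F (p.1 + d * p.2) p.2 (u (p.1 + d * p.2) + e p) 
      - rk4Step F (p.1 + d * p.2) p.2 (u (p.1 + d * p.2)) - e p - p.2 • Jop T F u p.1 (e p))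
      =O[lf T 5] fun p => p.2 ^ 7 := by
  obtain ⟨U, hU0, hU1, hUr, hU⟩ := u_taylor T hT F u hu hode
  have ht : ∀ᶠ p in lf T 5, p.1 ∈ Set.Icc 0 T := by
    filter_upwards [lf_mem T 5] with p hp using ⟨hp.1, by linarith [hp.2.1, hp.2.2]⟩
  -- boundedness of F
  have hbd : ∀ (b : ℝ) (z : ℝ × ℝ → X), 0 ≤ b → b ≤ 5 → z =O[lf T 5] (fun p => p.2 ^ 0) →
      (fun p : ℝ × ℝ => F (p.1 + b * p.2) (z p)) =O[lf T 5] fun p => p.2 ^ 0 := by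
    intro b z hb hb5 hz
    have h1 : (fun p : ℝ × ℝ => U 1 (p.1 + b * p.2)) =O[lf T 5] fun p => p.2 ^ 0 :=
      cont_O hb hb5 (hUr 1 6 rfl).continuousOn
    have h2 : (fun p : ℝ × ℝ => u (p.1 + b * p.2)) =O[lf T 5] fun p => p.2 ^ 0 :=
      cont_O hb hb5 hu.continuousOn
    have h3 := (lip_O T F μ hLip (lf_Icc T hb hb5) (z := z) 
      (z' := fun p => u (p.1 + b * p.2))).trans (hz.sub h2)
    refine (h3.add h1).congr_left fun p => ?_
    rw [hU1]; module
  have hFJ : ∀ (b : ℝ) (z z' : ℝ × ℝ → X), 0 ≤ b → b ≤ 5 → 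
      (fun p => z p - u p.1) =O[lf T 5] (fun p => p.2 ^ 1) → 
      (fun p => z' p - u p.1) =O[lf T 5] (fun p => p.2 ^ 1) → 
      (fun p => z p - z' p - e p) =O[lf T 5] (fun p => p.2 ^ 6) → 
      (fun p : ℝ × ℝ => F (p.1 + b * p.2) (z p) - F (p.1 + b * p.2) (z' p) - Jop T F u p.1 (e p)) 
        =O[lf T 5] fun p => p.2 ^ 6 := by
    intro b z z' hb hb5 hz hz' hzz
    have h1 := lemJ_O T hT F u hF hu (l := lf T 5) (a := fun p => p.1) (s := fun p => p.1 + b * p.2)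
      (r := fun p => p.2 ^ 1) (by simpa using lf_snd T 5) ht (lf_Icc T hb hb5) 
      (by 
        refine ((isBigO_refl (fun p : ℝ × ℝ => p.2 ^ 1) (lf T 5)).const_mul_left b).congr_left fun p => ?_
        ring) hz hz'
    have h2 : (fun p => z p - z' p) =O[lf T 5] fun p => p.2 ^ 5 := 
      ((hzz.trans (pow_O (by norm_num : 5 ≤ 6))).add he).congr_left fun p => by module
    have h3 : (fun p : ℝ × ℝ => p.2 ^ 1 * ‖z p - z' p‖) =O[lf T 5] fun p => p.2 ^ 6 := 
      ((isBigO_refl (fun p : ℝ × ℝ => p.2 ^ 1) _).mul h2.norm_left).congr_right fun p => by ring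
    have h4 := J_apply_O T hT F u hF hu (c := 5) (d := 0) le_rfl (by norm_num) hzz
    refine ((h1.trans h3).add h4).congr_left fun p => ?_
    simp only [zero_mul, add_zero, map_sub]
    module
  have hJe : (fun p => Jop T F u p.1 (e p)) =O[lf T 5] fun p => p.2 ^ 5 := 
    (J_apply_O T hT F u hF hu (c := 5) (d := 0) le_rfl (by norm_num) he).congr_left fun p => by simp
  have hud : (fun p : ℝ × ℝ => u (p.1 + d * p.2) - u p.1) =O[lf T 5] fun p => p.2 ^ 1 := by
    refine (hU.isBigO 0 1 (by norm_num) (c := 5) d h0 (by linarith)).congr_left fun p => ?_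
    simp [hU0]
  have hub : (fun p : ℝ × ℝ => u (p.1 + d * p.2)) =O[lf T 5] fun p => p.2 ^ 0 :=
    cont_O h0 (by linarith) hu.continuousOn
  have hueb : (fun p : ℝ × ℝ => u (p.1 + d * p.2) + e p) =O[lf T 5] fun p => p.2 ^ 0 :=
    hub.add (he.trans (pow_O (by norm_num)))
  have hued : (fun p : ℝ × ℝ => u (p.1 + d * p.2) + e p - u p.1) =O[lf T 5] fun p => p.2 ^ 1 := 
    (hud.add (he.trans (pow_O (by norm_num : 1 ≤ 5)))).congr_left fun p => by module
  -- one stage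
  have stage : ∀ (a b : ℝ) (k k' : ℝ × ℝ → X), 0 ≤ b → b ≤ 5 → k =O[lf T 5] (fun p => p.2 ^ 0) → 
      k' =O[lf T 5] (fun p => p.2 ^ 0) → 
      (fun p => k p - k' p - Jop T F u p.1 (e p)) =O[lf T 5] (fun p => p.2 ^ 6) →
      (fun p : ℝ × ℝ => F (p.1 + b * p.2) (u (p.1 + d * p.2) + e p + (a * p.2) • k p)) 
        =O[lf T 5] (fun p => p.2 ^ 0) ∧ 
      (fun p : ℝ × ℝ => F (p.1 + b * p.2) (u (p.1 + d * p.2) + (a * p.2) • k' p)) 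
        =O[lf T 5] (fun p => p.2 ^ 0) ∧
      (fun p : ℝ × ℝ => F (p.1 + b * p.2) (u (p.1 + d * p.2) + e p + (a * p.2) • k p) 
        - F (p.1 + b * p.2) (u (p.1 + d * p.2) + (a * p.2) • k' p) - Jop T F u p.1 (e p)) 
        =O[lf T 5] (fun p => p.2 ^ 6) := by
    intro a b k k' hb hb5 hk hk' hkk
    have g1 := snd_smul_O hk a
    have g2 := snd_smul_O hk' a
    have hkd : (fun p => k p - k' p) =O[lf T 5] fun p => p.2 ^ 5 := 
      ((hkk.trans (pow_O (by norm_num : 5 ≤ 6))).add hJe).congr_left fun p => by module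
    refine ⟨hbd b _ hb hb5 (hueb.add (g1.trans (pow_O (by norm_num)))), 
      hbd b _ hb hb5 (hub.add (g2.trans (pow_O (by norm_num)))), hFJ b _ _ hb hb5 ?_ ?_ ?_⟩
    · exact (hued.add g1).congr_left fun p => by module
    · exact (hud.add g2).congr_left fun p => by module
    · exact (snd_smul_O hkd a).congr_left fun p => by module
  have k1 := hbd d _ h0 (by linarith) hueb
  have k1' := hbd d _ h0 (by linarith) hub
  have k1d := hFJ d _ _ h0 (by linarith) hued hud (by simpa using isBigO_zero _ _)
  obtain ⟨k2, k2', k2d⟩ := stage (1/2) (d + 1/2) _ _ (by linarith) (by linarith) k1 k1' k1d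
  obtain ⟨k3, k3', k3d⟩ := stage (1/2) (d + 1/2) _ _ (by linarith) (by linarith) k2 k2' k2d
  obtain ⟨k4, k4', k4d⟩ := stage 1 (d + 1) _ _ (by linarith) (by linarith) k3 k3' k3d
  refine (snd_smul_O (((k1d.add (k2d.const_smul_left (2:ℝ))).add (k3d.const_smul_left (2:ℝ))).add k4d)
    (1/6)).congr_left fun p => ?_
  have i1 : p.2 / 2 = (1/2) * p.2 := by ring
  have i2 : p.2 / 6 = (1/6) * p.2 := by ring
  have i3 : p.1 + d * p.2 + (1/2) * p.2 = p.1 + (d + 1/2) * p.2 := by ring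
  have i4 : p.1 + d * p.2 + p.2 = p.1 + (d + 1) * p.2 := by ring
  simp only [rk4Step, i1, i2, i3, i4, Pi.smul_apply, one_mul]
  module

theorem rk4_err (T : ℝ) (hT : 0 < T) (F : ℝ → X → X) (μ : ℝ)
    (hF : ContDiffOn ℝ 6 (Function.uncurry F) (Set.Icc 0 T ×ˢ (Set.univ : Set X)))
    (hLip : ∀ t ∈ Set.Icc 0 T, ∀ x y : X, ‖F t x - F t y‖ ≤ μ * ‖x - y‖)
    (u : ℝ → X) (hu : ContDiffOn ℝ 7 u (Set.Icc 0 T))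
    (hode : ∀ t ∈ Set.Icc 0 T, HasDerivAt u (F t (u t)) t) :
    ∃ P Q : ℝ × ℝ → X, Q =O[lf T 5] (fun p => p.2 ^ 6) ∧ ∀ i : ℕ, i ≤ 5 →
      (fun p : ℝ × ℝ => rk4Iter F p.1 p.2 (u p.1) i - u (p.1 + (i : ℝ) * p.2) 
        - ((i : ℝ) • P p + ((i : ℝ) * (i - 1) / 2) • Q p)) =O[lf T 5] fun p => p.2 ^ 7 := by
  obtain ⟨R, hR, hsh⟩ := dl_shift T hT F μ hF hLip u hu hode
  have hdl : dl F u =O[lf T 5] fun p => p.2 ^ 5 := by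
    refine ((rk4_order T hT F μ hF hLip u hu hode).comp_tendsto 
      (lf_shift T (c := 5) le_rfl (by norm_num))).congr_left fun p => ?_
    simp [dl]
  have hJ0 : ∀ {f : ℝ × ℝ → X} {n : ℕ}, f =O[lf T 5] (fun p => p.2 ^ n) → 
      (fun p => Jop T F u p.1 (f p)) =O[lf T 5] fun p => p.2 ^ n := fun h =>
    (J_apply_O T hT F u hF hu (c := 5) (d := 0) le_rfl (by norm_num) h).congr_left fun p => by simp
  have hQ : (fun p => R p + (1 * p.2) • Jop T F u p.1 (dl F u p)) =O[lf T 5] fun p => p.2 ^ 6 :=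
    hR.add (snd_smul_O (hJ0 hdl) 1)
  refine ⟨dl F u, _, hQ, ?_⟩
  set Q : ℝ × ℝ → X := fun p => R p + (1 * p.2) • Jop T F u p.1 (dl F u p) with hQdef
  intro i
  induction i with
  | zero =>
    intro _
    simpa [rk4Iter] using isBigO_zero _ _
  | succ i ih =>
    intro hi
    have ih := ih (by omega)
    have hi4 : (i : ℝ) ≤ 4 := by exact_mod_cast (by omega : i ≤ 4)
    set E : ℝ × ℝ → X := fun p => rk4Iter F p.1 p.2 (u p.1) i - u (p.1 + (i : ℝ) * p.2) with hE
    have hE6 : (fun p => E p - (i : ℝ) • dl F u p) =O[lf T 5] fun p => p.2 ^ 6 := by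
      refine ((ih.trans (pow_O (by norm_num : 6 ≤ 7))).add 
        (hQ.const_smul_left ((i : ℝ) * (i - 1) / 2))).congr_left fun p => ?_
      simp only [Pi.smul_apply]
      module
    have hE5 : E =O[lf T 5] fun p => p.2 ^ 5 := by
      refine ((hE6.trans (pow_O (by norm_num : 5 ≤ 6))).add 
        (hdl.const_smul_left (i : ℝ))).congr_left fun p => ?_
      simp only [Pi.smul_apply]
      module
    have hs := step_diff T hT F μ hF hLip u hu hode i (by positivity) hi4 E hE5
    have hj := snd_smul_O (hJ0 hE6) 1
    refine (((hs.add hj).add ih).add (hsh i (by positivity) hi4)).congr_left fun p => ?_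
    have e1 : u (p.1 + (i : ℝ) * p.2) + E p = rk4Iter F p.1 p.2 (u p.1) i := by
      simp only [hE]; module
    have e2 : p.1 + ((i + 1 : ℕ) : ℝ) * p.2 = p.1 + (i : ℝ) * p.2 + 1 * p.2 := by push_cast; ring
    rw [e1, e2]
    simp only [rk4Iter, dl, hQdef, map_sub, map_smul, hE]
    push_cast
    module


theorem dc_trunc (T : ℝ) (hT : 0 < T) (F : ℝ → X → X) (μ : ℝ)
    (hF : ContDiffOn ℝ 6 (Function.uncurry F) (Set.Icc 0 T ×ˢ (Set.univ : Set X)))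
    (hLip : ∀ t ∈ Set.Icc 0 T, ∀ x y : X, ‖F t x - F t y‖ ≤ μ * ‖x - y‖)
    (u : ℝ → X) (hu : ContDiffOn ℝ 7 u (Set.Icc 0 T))
    (hode : ∀ t ∈ Set.Icc 0 T, HasDerivAt u (F t (u t)) t) :
    (fun p : ℝ × ℝ => dcStep F p.1 (5 * p.2) (u p.1) - u (p.1 + 5 * p.2)) 
      =O[lf T 5] fun p => p.2 ^ 7 := by
  obtain ⟨P, Q, hQ, hE⟩ := rk4_err T hT F μ hF hLip u hu hode
  obtain ⟨U, hU0, hU1, hUr, hU⟩ := u_taylor T hT F u hu hode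
  set w : ℕ → ℝ × ℝ → X := fun i p => rk4Iter F p.1 p.2 (u p.1) i with hw
  have hw0 : ∀ p, w 0 p = u p.1 := fun p => rfl
  have tE : ∀ i : ℕ, i ≤ 5 → (fun p : ℝ × ℝ => w i p - ∑ j ∈ range 7, 
      (((i : ℝ) * p.2) ^ j / (j.factorial : ℝ)) • U j p.1 - ((i : ℝ) • P p + ((i : ℝ) * (i - 1) / 2) • Q p)) 
      =O[lf T 5] fun p => p.2 ^ 7 := by
    intro i hi
    refine ((hE i hi).add (hU.isBigO 0 7 (by norm_num) (c := 5) i (by positivity) 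
      (by exact_mod_cast hi))).congr_left fun p => ?_
    simp only [hw, hU0, zero_add]
    module
  have tB : ∀ i : ℕ, i ≤ 5 → (fun p : ℝ × ℝ => w i p - ∑ j ∈ range 6, 
      (((i : ℝ) * p.2) ^ j / (j.factorial : ℝ)) • U j p.1 - (i : ℝ) • P p) 
      =O[lf T 5] fun p => p.2 ^ 6 := by
    intro i hi
    refine ((((hE i hi).trans (pow_O (by norm_num : 6 ≤ 7))).add 
      (hQ.const_smul_left ((i : ℝ) * (i - 1) / 2))).add (hU.isBigO 0 6 (by norm_num) (c := 5) i (by positivity) 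
      (by exact_mod_cast hi))).congr_left fun p => ?_
    simp only [hw, hU0, zero_add, Pi.smul_apply]
    module
  have B : (fun p : ℝ × ℝ => u p.1 + ((5/2) * p.2) • U 1 p.1 + dcB (fun i => w i p) - u (p.1 + (5/2) * p.2))
      =O[lf T 5] fun p => p.2 ^ 6 := by
    refine ((((((((tB 1 (by norm_num)).const_smul_left (-387 : ℝ)).add 
      ((tB 2 (by norm_num)).const_smul_left (402 : ℝ))).add
      ((tB 3 (by norm_num)).const_smul_left (-238 : ℝ))).add
      ((tB 4 (by norm_num)).const_smul_left (93 : ℝ))).add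
      ((tB 5 (by norm_num)).const_smul_left (-15 : ℝ))).const_smul_left (25/768 : ℝ)).sub 
      (hU.isBigO 0 6 (by norm_num) (c := 5) (5/2) (by norm_num) (by norm_num))).congr_left fun p => ?_
    simp only [dcB, hw0, Pi.smul_apply, sum_range_succ, range_zero, sum_empty, hU0, zero_add]
    simp only [Nat.factorial]
    push_cast
    module
  have A : (fun p : ℝ × ℝ => u p.1 + dcA (fun i => w i p) + (5 * p.2) • U 1 (p.1 + (5/2) * p.2) - u (p.1 + 5 * p.2))
      =O[lf T 5] fun p => p.2 ^ 7 := by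
    refine (((((((((tE 1 (by norm_num)).const_smul_left (-1 : ℝ)).add 
      ((tE 2 (by norm_num)).const_smul_left (18 : ℝ))).add
      ((tE 3 (by norm_num)).const_smul_left (-18 : ℝ))).add
      (tE 4 (by norm_num))).add
      ((tE 5 (by norm_num)).const_smul_left (3 : ℝ))).const_smul_left (125/384 : ℝ)).add
      (snd_smul_O (hU.isBigO 1 6 (by norm_num) (c := 5) (5/2) (by norm_num) (by norm_num)) 5)).sub 
      (hU.isBigO 0 7 (by norm_num) (c := 5) 5 (by norm_num) (by norm_num))).congr_left fun p => ?_
    simp only [dcA, hw0, Pi.smul_apply, sum_range_succ, range_zero, sum_empty, hU0, zero_add]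
    simp only [Nat.factorial]
    push_cast
    module
  have L := (lip_O T F μ hLip (lf_Icc T (c := 5) (d := 5/2) (by norm_num) (by norm_num)) 
    (z := fun p => u p.1 + ((5/2) * p.2) • U 1 p.1 + dcB (fun i => w i p))
    (z' := fun p => u (p.1 + (5/2) * p.2))).trans B
  refine (A.add (snd_smul_O L 5)).congr_left fun p => ?_
  have i1 : 5 * p.2 / 5 = p.2 := by ring
  have i2 : 5 * p.2 / 2 = (5/2) * p.2 := by ring
  simp only [dcStep, i1, i2, hU1, hw]
  module

theorem rk4Step_lip (T : ℝ) (F : ℝ → X → X) (μ : ℝ) (hμ : 0 ≤ μ)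
    (hLip : ∀ t ∈ Set.Icc 0 T, ∀ x y : X, ‖F t x - F t y‖ ≤ μ * ‖x - y‖) :
    ∃ C ≥ (0:ℝ), ∀ t h : ℝ, 0 ≤ t → 0 ≤ h → t + h ≤ T → ∀ x y : X, 
      ‖rk4Step F t h x - rk4Step F t h y - (x - y)‖ ≤ C * h * ‖x - y‖ := by
  by_cases hT : 0 ≤ T
  swap
  · exact ⟨0, le_rfl, fun t h a b c => absurd (by linarith) hT⟩
  have stage : ∀ (c : ℝ), 0 ≤ c → ∀ s ∈ Set.Icc 0 T, ∀ a : ℝ, 0 ≤ a → a ≤ T → ∀ x y k k' : X, 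
      ‖k - k'‖ ≤ c * ‖x - y‖ → ‖F s (x + a • k) - F s (y + a • k')‖ ≤ μ * (1 + T * c) * ‖x - y‖ := by
    intro c hc s hs a ha haT x y k k' hk
    refine (hLip s hs _ _).trans ?_
    rw [mul_assoc]
    refine mul_le_mul_of_nonneg_left ?_ hμ
    have : x + a • k - (y + a • k') = (x - y) + a • (k - k') := by module
    rw [this]
    refine (norm_add_le _ _).trans ?_
    rw [norm_smul, Real.norm_of_nonneg ha]
    have := mul_le_mul haT hk (norm_nonneg _) hT
    linarith
  set m2 := μ * (1 + T * μ) with hm2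
  set m3 := μ * (1 + T * m2) with hm3
  set m4 := μ * (1 + T * m3) with hm4
  have p2 : 0 ≤ m2 := by positivity
  have p3 : 0 ≤ m3 := by positivity
  have p4 : 0 ≤ m4 := by positivity
  refine ⟨(μ + 2 * m2 + 2 * m3 + m4) / 6, by positivity, ?_⟩
  intro t h ht hh hth x y
  have q1 := hLip t ⟨ht, by linarith⟩ x y
  have q2 := stage _ hμ (t + h/2) ⟨by linarith, by linarith⟩ (h/2) (by linarith) (by linarith) x y _ _ q1
  have q3 := stage _ p2 (t + h/2) ⟨by linarith, by linarith⟩ (h/2) (by linarith) (by linarith) x y _ _ q2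
  have q4 := stage _ p3 (t + h) ⟨by linarith, by linarith⟩ h hh (by linarith) x y _ _ q3
  simp only [rk4Step]
  set a1 := F t x
  set b1 := F t y
  set a2 := F (t + h/2) (x + (h/2) • a1)
  set b2 := F (t + h/2) (y + (h/2) • b1)
  set a3 := F (t + h/2) (x + (h/2) • a2)
  set b3 := F (t + h/2) (y + (h/2) • b2)
  set a4 := F (t + h) (x + h • a3)
  set b4 := F (t + h) (y + h • b3)
  have e : x + (h / 6) • (a1 + (2:ℝ) • a2 + (2:ℝ) • a3 + a4) 
      - (y + (h / 6) • (b1 + (2:ℝ) • b2 + (2:ℝ) • b3 + b4)) - (x - y) 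
      = (h/6) • ((a1 - b1) + (2:ℝ) • (a2 - b2) + (2:ℝ) • (a3 - b3) + (a4 - b4)) := by module
  rw [e, norm_smul, Real.norm_of_nonneg (by positivity)]
  have n2 : ∀ z : X, ‖(2:ℝ) • z‖ = 2 * ‖z‖ := fun z => by rw [norm_smul]; norm_num
  have : ‖(a1 - b1) + (2:ℝ) • (a2 - b2) + (2:ℝ) • (a3 - b3) + (a4 - b4)‖ 
      ≤ (μ + 2 * m2 + 2 * m3 + m4) * ‖x - y‖ := by
    refine (norm_add₄_le).trans ?_
    rw [n2, n2]
    linarith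
  calc _ ≤ (h/6) * ((μ + 2 * m2 + 2 * m3 + m4) * ‖x - y‖) := by gcongr
    _ = _ := by ring

theorem rk4Iter_lip (T : ℝ) (F : ℝ → X → X) (μ : ℝ) (hμ : 0 ≤ μ)
    (hLip : ∀ t ∈ Set.Icc 0 T, ∀ x y : X, ‖F t x - F t y‖ ≤ μ * ‖x - y‖) :
    ∃ C ≥ (0:ℝ), ∀ t h : ℝ, 0 ≤ t → 0 ≤ h → t + 5 * h ≤ T → ∀ x y : X, ∀ i ≤ 5,
      ‖rk4Iter F t h x i - rk4Iter F t h y i - (x - y)‖ ≤ C * h * ‖x - y‖ := by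
  obtain ⟨C, hC, hst⟩ := rk4Step_lip T F μ hμ hLip
  have main : ∀ i ≤ 5, ∃ D ≥ (0:ℝ), ∀ t h : ℝ, 0 ≤ t → 0 ≤ h → t + 5 * h ≤ T → ∀ x y : X, 
      ‖rk4Iter F t h x i - rk4Iter F t h y i - (x - y)‖ ≤ D * h * ‖x - y‖ := by
    intro i
    induction i with
    | zero => 
      intro _
      exact ⟨0, le_rfl, fun t h _ _ _ x y => by simp [rk4Iter]⟩
    | succ i ih =>
      intro hi
      obtain ⟨D, hD, ih⟩ := ih (by omega)
      refine ⟨D + C * (1 + D * |T|), by positivity, ?_⟩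
      intro t h ht hh hth x y
      have hi4 : (i : ℝ) ≤ 4 := by exact_mod_cast (by omega : i ≤ 4)
      have hih : (i : ℝ) * h ≤ 4 * h := by gcongr
      have h1 := ih t h ht hh hth x y
      have h2 := hst (t + i * h) h (by positivity) hh (by linarith) (rk4Iter F t h x i) (rk4Iter F t h y i)
      have h3 : ‖rk4Iter F t h x i - rk4Iter F t h y i‖ ≤ (1 + D * |T|) * ‖x - y‖ := by
        have e : rk4Iter F t h x i - rk4Iter F t h y i = 
          (rk4Iter F t h x i - rk4Iter F t h y i - (x - y)) + (x - y) := by module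
        rw [e]
        refine (norm_add_le _ _).trans ?_
        have : D * h * ‖x - y‖ ≤ D * |T| * ‖x - y‖ := by
          gcongr
          exact (by linarith : h ≤ T).trans (le_abs_self T)
        linarith
      have e : rk4Iter F t h x (i+1) - rk4Iter F t h y (i+1) - (x - y) = 
        (rk4Step F (t + i * h) h (rk4Iter F t h x i) - rk4Step F (t + i * h) h (rk4Iter F t h y i) 
          - (rk4Iter F t h x i - rk4Iter F t h y i)) + 
        (rk4Iter F t h x i - rk4Iter F t h y i - (x - y)) := by simp only [rk4Iter]; module
      rw [e]
      refine (norm_add_le _ _).trans ?_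
      have h4 : C * h * ‖rk4Iter F t h x i - rk4Iter F t h y i‖ ≤ C * h * ((1 + D * |T|) * ‖x - y‖) := by
        gcongr
      calc _ ≤ C * h * ((1 + D * |T|) * ‖x - y‖) + D * h * ‖x - y‖ := by linarith
        _ = _ := by ring
  choose! D hD hb using main
  refine ⟨∑ j ∈ range 6, |D j|, by positivity, ?_⟩
  intro t h ht hh hth x y i hi
  refine (hb i hi t h ht hh hth x y).trans ?_
  gcongr
  exact (le_abs_self _).trans (single_le_sum (f := fun j => |D j|) (fun j _ => abs_nonneg _) (by simp; omega))

theorem norm6 (a0 a1 a2 a3 a4 a5 B : ℝ) (w : ℕ → X) (h : ∀ i ≤ 5, ‖w i‖ ≤ B) :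
    ‖a0 • w 0 + a1 • w 1 + a2 • w 2 + a3 • w 3 + a4 • w 4 + a5 • w 5‖ 
      ≤ (|a0| + |a1| + |a2| + |a3| + |a4| + |a5|) * B := by
  have hs : ∀ (a : ℝ), ∀ i ≤ 5, ‖a • w i‖ ≤ |a| * B := fun a i hi => by
    rw [norm_smul, Real.norm_eq_abs]
    exact mul_le_mul_of_nonneg_left (h i hi) (abs_nonneg _)
  have := norm_add_le (a0 • w 0 + a1 • w 1 + a2 • w 2 + a3 • w 3 + a4 • w 4) (a5 • w 5)
  have := norm_add_le (a0 • w 0 + a1 • w 1 + a2 • w 2 + a3 • w 3) (a4 • w 4)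
  have := norm_add_le (a0 • w 0 + a1 • w 1 + a2 • w 2) (a3 • w 3)
  have := norm_add_le (a0 • w 0 + a1 • w 1) (a2 • w 2)
  have := norm_add_le (a0 • w 0) (a1 • w 1)
  linarith [hs a0 0 (by norm_num), hs a1 1 (by norm_num), hs a2 2 (by norm_num), hs a3 3 (by norm_num),
    hs a4 4 (by norm_num), hs a5 5 (by norm_num)]

theorem dc_lip (T : ℝ) (F : ℝ → X → X) (μ : ℝ) (hμ : 0 ≤ μ)
    (hLip : ∀ t ∈ Set.Icc 0 T, ∀ x y : X, ‖F t x - F t y‖ ≤ μ * ‖x - y‖) :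
    ∃ C ≥ (0:ℝ), ∀ t k : ℝ, 0 ≤ t → 0 ≤ k → t + k ≤ T → ∀ x y : X,
      ‖dcStep F t k x - dcStep F t k y‖ ≤ (1 + C * k) * ‖x - y‖ := by
  obtain ⟨C, hC, hit⟩ := rk4Iter_lip T F μ hμ hLip
  obtain ⟨a, ha0, ha⟩ : ∃ a ≥ (0:ℝ), ∀ (w w' : ℕ → X) (z : X) (B : ℝ), (∀ i ≤ 5, ‖w i - w' i - z‖ ≤ B) → 
      ‖dcA w - dcA w'‖ ≤ a * B := by
    refine ⟨|(125/384 * (-3) : ℝ)| + |(125/384 * (-1) : ℝ)| + |(125/384 * 18 : ℝ)| + |(125/384 * (-18) : ℝ)| + |(125/384 * 1 : ℝ)| + |(125/384 * 3 : ℝ)|, by positivity, fun w w' z B h => ?_⟩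
    have := norm6 (125/384 * (-3) : ℝ) (125/384 * (-1) : ℝ) (125/384 * 18 : ℝ) (125/384 * (-18) : ℝ) (125/384 * 1 : ℝ) (125/384 * 3 : ℝ) B (fun i => w i - w' i - z) h
    convert this using 2
    simp only [dcA]; module
  obtain ⟨b, hb0, hb⟩ : ∃ a ≥ (0:ℝ), ∀ (w w' : ℕ → X) (z : X) (B : ℝ), (∀ i ≤ 5, ‖w i - w' i - z‖ ≤ B) → 
      ‖dcB w - dcB w'‖ ≤ a * B := by
    refine ⟨|(25/768 * 145 : ℝ)| + |(25/768 * (-387) : ℝ)| + |(25/768 * 402 : ℝ)| + |(25/768 * (-238) : ℝ)| + |(25/768 * 93 : ℝ)| + |(25/768 * (-15) : ℝ)|, by positivity, fun w w' z B h => ?_⟩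
    have := norm6 (25/768 * 145 : ℝ) (25/768 * (-387) : ℝ) (25/768 * 402 : ℝ) (25/768 * (-238) : ℝ) (25/768 * 93 : ℝ) (25/768 * (-15) : ℝ) B (fun i => w i - w' i - z) h
    convert this using 2
    simp only [dcB]; module
  refine ⟨a * C + μ * (1 + |T| * μ + b * C * |T|), by positivity, ?_⟩
  intro t k ht hk htk x y
  have hkT : k ≤ |T| := (by linarith : k ≤ T).trans (le_abs_self T)
  have h5 := hit t (k/5) ht (by positivity) (by linarith) x y
  have hk5 : ∀ i ≤ 5, ‖rk4Iter F t (k/5) x i - rk4Iter F t (k/5) y i - (x - y)‖ ≤ C * k * ‖x - y‖ := by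
    intro i hi
    refine (h5 i hi).trans ?_
    gcongr
    linarith
  have hA := ha _ _ _ _ hk5
  have hB := hb _ _ _ _ hk5
  have hF0 := hLip t ⟨ht, by linarith⟩ x y
  have hFm := hLip (t + k/2) ⟨by linarith, by linarith⟩ 
    (x + (k/2) • F t x + dcB (rk4Iter F t (k/5) x)) (y + (k/2) • F t y + dcB (rk4Iter F t (k/5) y))
  have harg : ‖x + (k/2) • F t x + dcB (rk4Iter F t (k/5) x) - 
      (y + (k/2) • F t y + dcB (rk4Iter F t (k/5) y))‖ ≤ (1 + |T| * μ + b * C * |T|) * ‖x - y‖ := by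
    have e : x + (k/2) • F t x + dcB (rk4Iter F t (k/5) x) - 
      (y + (k/2) • F t y + dcB (rk4Iter F t (k/5) y)) = (x - y) + (k/2) • (F t x - F t y) 
        + (dcB (rk4Iter F t (k/5) x) - dcB (rk4Iter F t (k/5) y)) := by module
    rw [e]
    refine (norm_add₃_le).trans ?_
    rw [norm_smul, Real.norm_of_nonneg (by positivity)]
    have r1 : k/2 * ‖F t x - F t y‖ ≤ |T| * (μ * ‖x - y‖) := by
      gcongr
      linarith
    have r2 : b * (C * k * ‖x - y‖) ≤ b * (C * |T| * ‖x - y‖) := by gcongr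
    calc _ ≤ ‖x - y‖ + |T| * (μ * ‖x - y‖) + b * (C * |T| * ‖x - y‖) := by linarith
      _ = _ := by ring
  have e : dcStep F t k x - dcStep F t k y = (x - y) + (dcA (rk4Iter F t (k/5) x) - dcA (rk4Iter F t (k/5) y)) 
      + k • (F (t + k/2) (x + (k/2) • F t x + dcB (rk4Iter F t (k/5) x)) 
        - F (t + k/2) (y + (k/2) • F t y + dcB (rk4Iter F t (k/5) y))) := by
    simp only [dcStep]; module
  rw [e]
  refine (norm_add₃_le).trans ?_
  rw [norm_smul, Real.norm_of_nonneg hk]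
  have r3 := mul_le_mul_of_nonneg_left (hFm.trans (mul_le_mul_of_nonneg_left harg hμ)) hk
  calc _ ≤ ‖x - y‖ + a * (C * k * ‖x - y‖) + k * (μ * ((1 + |T| * μ + b * C * |T|) * ‖x - y‖)) := by linarith
    _ = _ := by ring

/-- **one-step error recursion (b24) for DC6RK2/4.**
Under the hypotheses of Theorem 4.1, there are constants `C > 0` and `k₀ > 0` such that
for every positive integer `N` with `k = T/N ≤ k₀`, the DC6RK2/4 sequence satisfies
`‖u^{6,n+1} − u(t_{n+1})‖ ≤ (1 + μk + (1/2)μ²k²)‖u^{6,n} − u(t_n)‖ + C k⁷`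
for every `n = 0, …, N − 1`. -/
theorem dc6rk24_error_recursion
    (T : ℝ) (hT : 0 < T) (F : ℝ → X → X) (μ : ℝ) (hμ : 0 ≤ μ)
    (hF : ContDiffOn ℝ 6 (Function.uncurry F) (Set.Icc 0 T ×ˢ (Set.univ : Set X)))
    (hLip : ∀ t ∈ Set.Icc 0 T, ∀ x y : X, ‖F t x - F t y‖ ≤ μ * ‖x - y‖)
    (u : ℝ → X) (u0 : X)
    (hu : ContDiffOn ℝ 7 u (Set.Icc 0 T))
    (hu0 : u 0 = u0)
    (hode : ∀ t ∈ Set.Icc 0 T, HasDerivAt u (F t (u t)) t) :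
    ∃ C > 0, ∃ k0 > 0, ∀ N : ℕ, 0 < N → T / N ≤ k0 →
      ∀ n : ℕ, n < N →
        ‖dcSeq F u0 (T / N) (n + 1) - u (((n : ℝ) + 1) * (T / N))‖
          ≤ (1 + μ * (T / N) + (1 / 2) * μ ^ 2 * (T / N) ^ 2)
              * ‖dcSeq F u0 (T / N) n - u ((n : ℝ) * (T / N))‖
            + C * (T / N) ^ 7 := by
  obtain ⟨C2, hC2, hst⟩ := dc_lip T F μ hμ hLip
  obtain ⟨C3, hC3, h0, hh0, htr⟩ := lf_bound (dc_trunc T hT F μ hF hLip u hu hode)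
  refine ⟨C2 * (C3 * T * Real.exp (C2 * T)) + C3, by positivity, 5 * h0, by positivity, ?_⟩
  intro N hN hk
  set k := T / N with hkdef
  have hN' : (0:ℝ) < N := by exact_mod_cast hN
  have hkpos : 0 < k := by positivity
  have hNk : (N : ℝ) * k = T := by rw [hkdef]; field_simp
  have htime : ∀ n : ℕ, n < N → (n : ℝ) * k + k ≤ T := by
    intro n hn
    have : ((n : ℝ) + 1) ≤ N := by exact_mod_cast hn
    have := mul_le_mul_of_nonneg_right this hkpos.le
    linarith
  have rec1 : ∀ n : ℕ, n < N → ‖dcSeq F u0 k (n + 1) - u (((n : ℝ) + 1) * k)‖ 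
      ≤ (1 + C2 * k) * ‖dcSeq F u0 k n - u ((n : ℝ) * k)‖ + C3 * k ^ 7 := by
    intro n hn
    have ht := htime n hn
    have htn : 0 ≤ (n : ℝ) * k := by positivity
    have a1 := hst ((n : ℝ) * k) k htn hkpos.le ht (dcSeq F u0 k n) (u ((n : ℝ) * k))
    have a2 := htr ((n : ℝ) * k) (k / 5) htn (by positivity) (by linarith) (by linarith)
    simp only [mul_div_cancel₀ k (by norm_num : (5:ℝ) ≠ 0)] at a2
    have e1 : ((n : ℝ) + 1) * k = n * k + k := by ring
    have e : dcSeq F u0 k (n + 1) - u (((n : ℝ) + 1) * k) = 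
      (dcStep F ((n : ℝ) * k) k (dcSeq F u0 k n) - dcStep F ((n : ℝ) * k) k (u ((n : ℝ) * k))) + 
      (dcStep F ((n : ℝ) * k) k (u ((n : ℝ) * k)) - u ((n : ℝ) * k + k)) := by
      rw [e1]; simp only [dcSeq]; module
    rw [e]
    have a3 : C3 * (k / 5) ^ 7 ≤ C3 * k ^ 7 := by
      gcongr
      linarith
    exact (norm_add_le _ _).trans (by linarith)
  have hq : 1 ≤ 1 + C2 * k := by
    have : 0 ≤ C2 * k := by positivity
    linarith
  have glob : ∀ n : ℕ, n ≤ N → ‖dcSeq F u0 k n - u ((n : ℝ) * k)‖ ≤ n * (C3 * k ^ 7) * (1 + C2 * k) ^ n := by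
    intro n
    induction n with
    | zero => intro _; simp [dcSeq, hu0]
    | succ n ih =>
      intro hn
      have i1 := ih (by omega)
      have i2 := rec1 n (by omega)
      have i3 := mul_le_mul_of_nonneg_left i1 (by linarith : 0 ≤ 1 + C2 * k)
      have i4 : C3 * k ^ 7 * 1 ≤ C3 * k ^ 7 * (1 + C2 * k) ^ (n + 1) := by
        gcongr
        exact one_le_pow₀ hq
      push_cast
      calc _ ≤ _ := i2
        _ ≤ (1 + C2 * k) * (n * (C3 * k ^ 7) * (1 + C2 * k) ^ n) + C3 * k ^ 7 * (1 + C2 * k) ^ (n + 1) := by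
            linarith
        _ = _ := by ring
  intro n hn
  have g1 := glob n hn.le
  have g2 : (1 + C2 * k) ^ n ≤ Real.exp (C2 * T) := by
    calc (1 + C2 * k) ^ n ≤ (Real.exp (C2 * k)) ^ n := by
            gcongr
            linarith [Real.add_one_le_exp (C2 * k)]
      _ = Real.exp (n * (C2 * k)) := by rw [Real.exp_nat_mul]
      _ ≤ Real.exp (C2 * T) := by
            refine Real.exp_le_exp.2 ?_
            have := mul_le_mul_of_nonneg_left (by linarith [htime n hn] : (n : ℝ) * k ≤ T) hC2
            linarith
  have g3 : ‖dcSeq F u0 k n - u ((n : ℝ) * k)‖ ≤ C3 * T * Real.exp (C2 * T) * k ^ 6 := by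
    refine g1.trans ?_
    have hnk : (n : ℝ) * k ≤ T := by linarith [htime n hn]
    calc (n : ℝ) * (C3 * k ^ 7) * (1 + C2 * k) ^ n = C3 * (n * k) * (1 + C2 * k) ^ n * k ^ 6 := by ring
      _ ≤ C3 * T * Real.exp (C2 * T) * k ^ 6 := by gcongr
  have g4 := mul_le_mul_of_nonneg_left g3 (by positivity : 0 ≤ C2 * k)
  have g5 : 0 ≤ (μ * k + (1 / 2) * μ ^ 2 * k ^ 2) * ‖dcSeq F u0 k n - u ((n : ℝ) * k)‖ := by positivity
  have g6 := rec1 n hn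
  calc _ ≤ _ := g6
    _ ≤ ‖dcSeq F u0 k n - u ((n : ℝ) * k)‖ + C2 * k * (C3 * T * Real.exp (C2 * T) * k ^ 6) + C3 * k ^ 7 := by
        linarith
    _ ≤ (1 + μ * k + (1 / 2) * μ ^ 2 * k ^ 2) * ‖dcSeq F u0 k n - u ((n : ℝ) * k)‖ 
        + C2 * k * (C3 * T * Real.exp (C2 * T) * k ^ 6) + C3 * k ^ 7 := by linarith
    _ = _ := by ring
end

section
/- Let X be a Banach space, u : [t, t+k] → X any function, 0 < h = k/5 ≤ 1, and let w₀, …, w₅ ∈ X with Θ_i = w_i − u(t + ih) for i = 0, …, 5. Suppose there is C₀ > 0 such that ‖h^{−m} Σ_{i=0}^{m} (−1)^i binom(m,i) Θ_{j+m−i}‖ ≤ C₀ h^4 for all integers m, j ≥ 0 with 1 ≤ m ≤ 5 and j + m ≤ 5. Define a(v₀,…,v₅) = (125/384)(−3v₀ − v₁ + 18v₂ − 18v₃ + v₄ + 3v₅) and b(v₀,…,v₅) = (25/768)(145v₀ − 387v₁ + 402v₂ − 238v₃ + 93v₄ − 15v₅). Then ‖a(w₀,…,w₅) − a(u(t),…,u(t+5h))‖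 ≤ ((125/24) + (125/128)) C₀ h^7 and ‖b(w₀,…,w₅) − b(u(t),…,u(t+5h))‖ ≤ ((25/8) + (25/48) + (75/128) + (125/256)) C₀ h^6. -/
open Finset

variable {X : Type*} [NormedAddCommGroup X] [NormedSpace ℝ X] [CompleteSpace X]

/-- **stability of the correction terms under the DCC.**
Let `u : ℝ → X` be any function, `0 < h = k/5 ≤ 1`, and `w₀, …, w₅ ∈ X` with
`Θᵢ = wᵢ − u(t + i h)`. If `‖h^{−m} ∑_{i=0}^{m} (−1)^i (m choose i) Θ_{j+m−i}‖ ≤ C₀ h⁴`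
for all `1 ≤ m ≤ 5`, `j + m ≤ 5`, then
`‖a(w) − a(u(t),…,u(t+5h))‖ ≤ (125/24 + 125/128) C₀ h⁷` and
`‖b(w) − b(u(t),…,u(t+5h))‖ ≤ (25/8 + 25/48 + 75/128 + 125/256) C₀ h⁶`. -/
theorem dc_correction_terms_bound
    (u : ℝ → X) (t k h : ℝ) (hhk : h = k / 5) (hh0 : 0 < h) (hh1 : h ≤ 1)
    (w : ℕ → X) (C0 : ℝ) (hC0 : 0 < C0)
    (hΘ : ∀ m j : ℕ, 1 ≤ m → m ≤ 5 → j + m ≤ 5 →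
      ‖(h ^ m)⁻¹ • ∑ i ∈ Finset.range (m + 1),
          ((-1 : ℝ) ^ i * (m.choose i : ℝ)) •
            (w (j + m - i) - u (t + ((j + m - i : ℕ) : ℝ) * h))‖ ≤ C0 * h ^ 4) :
    ‖dcA w - dcA (fun i => u (t + (i : ℝ) * h))‖
        ≤ (125 / 24 + 125 / 128) * C0 * h ^ 7 ∧
    ‖dcB w - dcB (fun i => u (t + (i : ℝ) * h))‖
        ≤ (25 / 8 + 25 / 48 + 75 / 128 + 125 / 256) * C0 * h ^ 6 := by
  have key : ∀ m j n : ℕ, 1 ≤ m → m ≤ 5 → j + m ≤ 5 → n ≤ m →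
      ‖∑ i ∈ Finset.range (m + 1), ((-1 : ℝ) ^ i * (m.choose i : ℝ)) •
            (w (j + m - i) - u (t + ((j + m - i : ℕ) : ℝ) * h))‖ ≤ C0 * h ^ (4 + n) := by
    intro m j n h1 h2 h3 h4
    have H := hΘ m j h1 h2 h3
    have hp : 0 < h ^ m := pow_pos hh0 m
    rw [norm_smul, norm_inv, Real.norm_of_nonneg hp.le, inv_mul_le_iff₀ hp] at H
    have h5 : h ^ (4 + m) ≤ h ^ (4 + n) :=
      pow_le_pow_of_le_one hh0.le hh1 (by omega)
    calc _ ≤ _ := H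
      _ = C0 * h ^ (4 + m) := by ring
      _ ≤ _ := mul_le_mul_of_nonneg_left h5 hC0.le
  have a3 := key 3 1 3 (by norm_num) (by norm_num) (by norm_num) (by norm_num)
  have a5 := key 5 0 3 (by norm_num) (by norm_num) (by norm_num) (by norm_num)
  have b2 := key 2 0 2 (by norm_num) (by norm_num) (by norm_num) (by norm_num)
  have b3 := key 3 0 2 (by norm_num) (by norm_num) (by norm_num) (by norm_num)
  have b4 := key 4 0 2 (by norm_num) (by norm_num) (by norm_num) (by norm_num)
  have b5 := key 5 0 2 (by norm_num) (by norm_num) (by norm_num) (by norm_num)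
  have c1 : ∀ (c : ℝ) (x : X) (B : ℝ), 0 ≤ c → ‖x‖ ≤ B → ‖c • x‖ ≤ c * B := by
    intro c x B hc hx
    rw [norm_smul, Real.norm_of_nonneg hc]
    exact mul_le_mul_of_nonneg_left hx hc
  constructor
  · have A3 := c1 (125 / 24) _ _ (by norm_num) a3
    have A5 := c1 (125 / 128) _ _ (by norm_num) a5
    refine le_trans (le_of_eq ?_) ((norm_add_le_of_le A3 A5).trans (le_of_eq (by ring)))
    congr 1
    simp only [dcA, Finset.sum_range_succ, Finset.sum_range_zero, Nat.choose]
    norm_num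
    module
  · have B2 := c1 (25 / 8) _ _ (by norm_num) b2
    have B3 := c1 (25 / 48) _ _ (by norm_num) b3
    have B4 := c1 (75 / 128) _ _ (by norm_num) b4
    have B5 := c1 (125 / 256) _ _ (by norm_num) b5
    refine le_trans (le_of_eq ?_) ((norm_sub_le_of_le
      (norm_add_le_of_le (norm_sub_le_of_le B2 B3) B4) B5).trans (le_of_eq (by ring)))
    congr 1
    simp only [dcB, Finset.sum_range_succ, Finset.sum_range_zero, Nat.choose]
    norm_num
    module
end

section
/- Let X be a Banach space, T > 0, m a positive integer, and F : X → X of class C^{m+1} with all Fréchet derivatives of order 1, …, m+1 bounded on X. Let u ∈ C^{m+1}([0,T], X), let 0 < k ≤ 1, t_n = nk with Nk ≤ T, and let {v^n}_{n=0}^{N} be elements of X such that ‖D₊^j(v^n − u(t_n))‖ ≤ C₀ k^4 for all j = 0, 1, …, m and all n with n + j ≤ N, where D₊^j e^n = k^{−j} Σ_{i=0}^{j} (−1)^i binom(j,i) e^{n+j−i}. Then there exists a constant C, depending only on m, T, C₀, the bounds on the derivatives of F, and the derivatives of u up to order m+1, such that ‖D₊^m(F(v^n) − F(u(t_n)))‖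 ≤ C k^4 for all n with n + m ≤ N. -/
open Finset

theorem fd_shift {E : Type*} [AddCommGroup E] (j : ℕ) (f : ℕ → E) (n : ℕ) :
    (fwdDiff (1:ℕ))^[j] (fun n => f (n+1)) n = (fwdDiff (1:ℕ))^[j] f (n+1) := by
  induction j generalizing n with
  | zero => rfl
  | succ j ih => simp only [Function.iterate_succ', Function.comp_apply, fwdDiff, ih]

theorem fd_leibniz {X Y : Type*} [NormedAddCommGroup X] [NormedSpace ℝ X]
    [NormedAddCommGroup Y] [NormedSpace ℝ Y] (k : ℝ) (j : ℕ) :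
    ∀ (N : ℕ) (a b : ℝ) (A : ℕ → X →L[ℝ] Y) (e : ℕ → X),
      (∀ i ≤ j, ∀ n, n + i ≤ N → ‖(fwdDiff (1:ℕ))^[i] A n‖ ≤ a * k^i) →
      (∀ i ≤ j, ∀ n, n + i ≤ N → ‖(fwdDiff (1:ℕ))^[i] e n‖ ≤ b * k^i) →
      ∀ n, n + j ≤ N → ‖(fwdDiff (1:ℕ))^[j] (fun n => A n (e n)) n‖ ≤ 2^j * (a * b) * k^j := by
  induction j with
  | zero =>
    intro N a b A e hA he n hn
    have h1 := hA 0 le_rfl n hn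
    have h2 := he 0 le_rfl n hn
    simp only [Function.iterate_zero, id, pow_zero, mul_one, one_mul] at *
    exact (A n).le_of_opNorm_le_of_le h1 h2
  | succ j ih =>
    intro N a b A e hA he n hn
    obtain ⟨N, rfl⟩ : ∃ N', N = N' + 1 := ⟨N - 1, by omega⟩
    have key : fwdDiff (1:ℕ) (fun n => A n (e n)) =
        (fun n => (fun n => A (n+1)) n (fwdDiff (1:ℕ) e n)) +
        (fun n => (fwdDiff (1:ℕ) A n) (e n)) := by
      ext n; simp [fwdDiff]
    rw [Function.iterate_succ, Function.comp_apply, key, fwdDiff_iter_add]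
    have h1 := ih N a (b * k) (fun n => A (n+1)) (fwdDiff (1:ℕ) e)
      (fun i hi n hn => by rw [fd_shift]; exact hA i (by omega) _ (by omega))
      (fun i hi n hn => by
        have := he (i+1) (by omega) n (by omega)
        rw [Function.iterate_succ, Function.comp_apply] at this
        exact this.trans_eq (by ring)) n (by omega)
    have h2 := ih N (a * k) b (fwdDiff (1:ℕ) A) e
      (fun i hi n hn => by
        have := hA (i+1) (by omega) n (by omega)
        rw [Function.iterate_succ, Function.comp_apply] at this
        exact this.trans_eq (by ring))
      (fun i hi n hn => he i (by omega) _ (by omega)) n (by omega)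
    refine (norm_add_le _ _).trans ((add_le_add h1 h2).trans_eq (by ring))

theorem fd_hasDerivAt {Y : Type*} [NormedAddCommGroup Y] [NormedSpace ℝ Y] (j : ℕ)
    (g : ℕ → ℝ → Y) (g' : ℕ → Y) (s : ℝ) (h : ∀ n, HasDerivAt (g n) (g' n) s) (n : ℕ) :
    HasDerivAt (fun s => (fwdDiff (1:ℕ))^[j] (fun n => g n s) n)
      ((fwdDiff (1:ℕ))^[j] g' n) s := by
  induction j generalizing n with
  | zero => exact h n
  | succ j ih =>
    simp only [Function.iterate_succ', Function.comp_apply, fwdDiff]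
    exact (ih (n+1)).sub (ih n)

/-- interpolation estimate -/
theorem fd_mvt {X Y : Type*} [NormedAddCommGroup X] [NormedSpace ℝ X]
    [NormedAddCommGroup Y] [NormedSpace ℝ Y] (G : X → Y) (hG : Differentiable ℝ G) (j : ℕ)
    (w e : ℕ → X) (n : ℕ) (C : ℝ)
    (h : ∀ s ∈ Set.Ico (0:ℝ) 1,
      ‖(fwdDiff (1:ℕ))^[j] (fun n => fderiv ℝ G (w n + s • e n) (e n)) n‖ ≤ C) :
    ‖(fwdDiff (1:ℕ))^[j] (fun n => G (w n + e n) - G (w n)) n‖ ≤ C := by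
  have hd : ∀ s : ℝ, HasDerivAt
      (fun s : ℝ => (fwdDiff (1:ℕ))^[j] (fun n => G (w n + s • e n)) n)
      ((fwdDiff (1:ℕ))^[j] (fun n => fderiv ℝ G (w n + s • e n) (e n)) n) s := by
    intro s
    apply fd_hasDerivAt j (fun n s => G (w n + s • e n))
    intro n
    have h1 : HasDerivAt (fun s : ℝ => w n + s • e n) (e n) s := by
      simpa using ((hasDerivAt_id s).smul_const (e n)).const_add (w n)
    exact (hG (w n + s • e n)).hasFDerivAt.comp_hasDerivAt s h1
  have := norm_image_sub_le_of_norm_deriv_le_segment_01'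
    (fun s hs => (hd s).hasDerivWithinAt) h
  have e1 : (fun n => G (w n + e n) - G (w n)) =
      (fun n => G (w n + e n)) + (-1:ℝ) • (fun n => G (w n)) := by
    ext n; simp [sub_eq_add_neg]
  rw [e1, fwdDiff_iter_add, fwdDiff_iter_const_smul]
  simpa [sub_eq_add_neg] using this

universe u0
theorem fd_comp {X : Type u0} [NormedAddCommGroup X] [NormedSpace ℝ X] (j : ℕ) (M B : ℝ)
    (hM : 0 ≤ M) :
    ∀ {Y : Type u0} [NormedAddCommGroup Y] [NormedSpace ℝ Y] (G : X → Y), ContDiff ℝ j G →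
      (∀ i ≤ j, ∀ x, ‖iteratedFDeriv ℝ i G x‖ ≤ B) →
      ∃ C : ℝ, 0 ≤ C ∧ ∀ k : ℝ, 0 < k → ∀ (N : ℕ) (w : ℕ → X),
        (∀ i ≤ j, 1 ≤ i → ∀ n, n + i ≤ N → ‖(fwdDiff (1:ℕ))^[i] w n‖ ≤ M * k^i) →
        ∀ i ≤ j, ∀ n, n + i ≤ N → ‖(fwdDiff (1:ℕ))^[i] (fun n => G (w n)) n‖ ≤ C * k^i := by
  induction j with
  | zero =>
    intro Y _ _ G hG hB
    refine ⟨B, (norm_nonneg _).trans (hB 0 le_rfl 0), ?_⟩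
    intro k hk N w hw i hi n hn
    obtain rfl : i = 0 := by omega
    simpa using hB 0 le_rfl (w n)
  | succ j ih =>
    intro Y _ _ G hG hB
    obtain ⟨C1, hC1, h1⟩ := ih G (hG.of_le (by norm_cast; omega)) (fun i hi => hB i (by omega))
    obtain ⟨C2, hC2, h2⟩ := ih (fderiv ℝ G) (hG.fderiv_right (by norm_cast))
      (fun i hi x => by rw [norm_iteratedFDeriv_fderiv]; exact hB (i+1) (by omega) x)
    refine ⟨max C1 (2^j * (C2 * M)), hC1.trans (le_max_left _ _), ?_⟩
    intro k hk N w hw i hi n hn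
    rcases Nat.lt_or_ge i (j+1) with hlt | hge
    · refine (h1 k hk N w (fun i hi => hw i (by omega)) i (by omega) n hn).trans ?_
      gcongr
      exact le_max_left _ _
    · obtain rfl : i = j + 1 := by omega
      obtain ⟨N, rfl⟩ : ∃ N', N = N' + 1 := ⟨N - 1, by omega⟩
      have key : ‖(fwdDiff (1:ℕ))^[j+1] (fun n => G (w n)) n‖ ≤ 2^j * (C2 * (M * k)) * k^j := by
        have e1 : fwdDiff (1:ℕ) (fun n => G (w n)) =
            fun n => G (w n + fwdDiff (1:ℕ) w n) - G (w n) := by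
          ext n; simp [fwdDiff]
        rw [Function.iterate_succ, Function.comp_apply, e1]
        apply fd_mvt G (hG.differentiable (by norm_cast))
        intro s hs
        refine fd_leibniz k j N C2 (M * k) (fun n => fderiv ℝ G (w n + s • fwdDiff (1:ℕ) w n))
          (fwdDiff (1:ℕ) w) ?_ ?_ n (by omega)
        · apply h2 k hk N (fun n => w n + s • fwdDiff (1:ℕ) w n)
          intro i hi hi1 n hn
          have e2 : (fun n => w n + s • fwdDiff (1:ℕ) w n) =
            (1 - s) • w + s • (fun n => w (n+1)) := by
            ext n; simp [fwdDiff, smul_sub, sub_smul]; abel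
          rw [e2, fwdDiff_iter_add, fwdDiff_iter_const_smul, fwdDiff_iter_const_smul]
          simp only [Pi.add_apply, Pi.smul_apply, fd_shift]
          have a1 := hw i (by omega) hi1 n (by omega)
          have a2 := hw i (by omega) hi1 (n+1) (by omega)
          refine (norm_add_le _ _).trans ?_
          rw [norm_smul, norm_smul, Real.norm_of_nonneg hs.1,
            Real.norm_of_nonneg (by linarith [hs.2])]
          nlinarith [mul_le_mul_of_nonneg_left a1 (show 0 ≤ 1 - s by linarith [hs.2]),
            mul_le_mul_of_nonneg_left a2 hs.1]
        · intro i hi n hn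
          have := hw (i+1) (by omega) (by omega) n (by omega)
          rw [Function.iterate_succ, Function.comp_apply] at this
          exact this.trans_eq (by ring)
      refine key.trans ?_
      calc 2^j * (C2 * (M * k)) * k^j = (2^j * (C2 * M)) * k^(j+1) := by ring
        _ ≤ _ := by gcongr; exact le_max_right _ _

theorem fd_u_deriv {X : Type*} [NormedAddCommGroup X] [NormedSpace ℝ X] (T k : ℝ) (hk : 0 < k)
    (u u' : ℝ → X) (h : ∀ x ∈ Set.Icc 0 T, HasDerivWithinAt u (u' x) (Set.Icc 0 T) x) (j : ℕ) :
    ∀ x ∈ Set.Icc 0 (T - j * k), HasDerivWithinAt ((fwdDiff k)^[j] u) ((fwdDiff k)^[j] u' x)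
      (Set.Icc 0 (T - j * k)) x := by
  induction j with
  | zero => simpa using h
  | succ j ih =>
    intro x hx
    simp only [Function.iterate_succ', Function.comp_apply]
    push_cast at hx ⊢
    have hsub : Set.Icc 0 (T - ((j:ℝ)+1) * k) ⊆ Set.Icc 0 (T - (j:ℝ) * k) :=
      Set.Icc_subset_Icc le_rfl (by linarith)
    have b := (ih x (hsub hx)).mono hsub
    have a0 := ih (x + k) ⟨by linarith [hx.1], by linarith [hx.2]⟩
    have b0 : HasDerivWithinAt (fun y : ℝ => y + k) 1 (Set.Icc 0 (T - (j+1) * k)) x :=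
      ((hasDerivAt_id x).add_const k).hasDerivWithinAt
    have c0 : Set.MapsTo (fun y : ℝ => y + k) (Set.Icc 0 (T - (j+1) * k))
        (Set.Icc 0 (T - j * k)) :=
      fun y hy => ⟨by linarith [hy.1], by linarith [hy.2]⟩
    have a := HasDerivWithinAt.scomp (h := fun y : ℝ => y + k) x a0 b0 c0
    rw [one_smul] at a
    exact a.sub b

theorem fd_u {X : Type*} [NormedAddCommGroup X] [NormedSpace ℝ X] (T : ℝ) (hT : 0 < T) (j : ℕ) :
    ∀ u : ℝ → X, ContDiffOn ℝ j u (Set.Icc 0 T) → ∃ M : ℝ, 0 ≤ M ∧ ∀ k : ℝ, 0 < k →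
      ∀ t, 0 ≤ t → t + j * k ≤ T → ‖(fwdDiff k)^[j] u t‖ ≤ M * k^j := by
  induction j with
  | zero =>
    intro u hu
    obtain ⟨M, hM⟩ := isCompact_Icc.exists_bound_of_continuousOn hu.continuousOn
    refine ⟨M, (norm_nonneg _).trans (hM 0 ⟨le_rfl, hT.le⟩), fun k hk t ht ht' => ?_⟩
    simpa using hM t ⟨ht, by simpa using ht'⟩
  | succ j ih =>
    intro u hu
    obtain ⟨M, hM, h⟩ := ih (derivWithin u (Set.Icc 0 T))
      (hu.derivWithin (uniqueDiffOn_Icc hT) (by norm_cast))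
    refine ⟨M, hM, fun k hk t ht ht' => ?_⟩
    push_cast at ht'
    have hd := fd_u_deriv T k hk u (derivWithin u (Set.Icc 0 T))
      (fun x hx => (hu.differentiableOn (by norm_cast) x hx).hasDerivWithinAt) j
    have := (convex_Icc 0 (T - j * k)).norm_image_sub_le_of_norm_hasDerivWithin_le
      (C := M * k^j) hd (fun x hx => h k hk x hx.1 (by linarith [hx.2]))
      (x := t) (y := t + k) ⟨ht, by linarith⟩ ⟨by linarith, by linarith⟩
    rw [Function.iterate_succ', Function.comp_apply]
    refine this.trans_eq ?_
    rw [add_sub_cancel_left, Real.norm_of_nonneg hk.le]; ring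

theorem fd_u_seq {X : Type*} [AddCommGroup X] (u : ℝ → X) (k : ℝ) (j n : ℕ) :
    (fwdDiff (1:ℕ))^[j] (fun n : ℕ => u (n * k)) n = (fwdDiff k)^[j] u (n * k) := by
  induction j generalizing n with
  | zero => rfl
  | succ j ih =>
    simp only [Function.iterate_succ', Function.comp_apply, fwdDiff, ih]
    push_cast
    rw [add_mul, one_mul]

theorem fd_sum {X : Type*} [AddCommGroup X] [Module ℝ X] (f : ℕ → X) (j n : ℕ) :
    ∑ i ∈ Finset.range (j + 1), ((-1 : ℝ) ^ i * (j.choose i : ℝ)) • f (n + j - i)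
      = (fwdDiff (1:ℕ))^[j] f n := by
  rw [fwdDiff_iter_eq_sum_shift, ← Finset.sum_range_reflect]
  apply Finset.sum_congr rfl
  intro i hi
  have hi : i ≤ j := by simpa [Nat.lt_succ_iff] using hi
  rw [show j + 1 - 1 - i = j - i by omega, Nat.choose_symm hi,
    show n + j - (j - i) = n + i • 1 by simp; omega, ← Int.cast_smul_eq_zsmul ℝ]
  push_cast
  rfl

theorem forward_difference_of_F_bound
    {X : Type*} [NormedAddCommGroup X] [NormedSpace ℝ X] [CompleteSpace X]
    (T : ℝ) (hT : 0 < T) (m : ℕ) (hm : 0 < m)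
    (F : X → X) (hF : ContDiff ℝ (m + 1) F)
    (B : ℝ) (hB : ∀ i : ℕ, 1 ≤ i → i ≤ m + 1 → ∀ x : X, ‖iteratedFDeriv ℝ i F x‖ ≤ B)
    (u : ℝ → X) (hu : ContDiffOn ℝ (m + 1) u (Set.Icc 0 T))
    (C0 : ℝ) (hC0 : 0 < C0) :
    ∃ C : ℝ, ∀ k : ℝ, 0 < k → k ≤ 1 → ∀ N : ℕ, (N : ℝ) * k ≤ T →
      ∀ v : ℕ → X,
        (∀ j : ℕ, j ≤ m → ∀ n : ℕ, n + j ≤ N →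
          ‖(k ^ j)⁻¹ • ∑ i ∈ Finset.range (j + 1),
              ((-1 : ℝ) ^ i * (j.choose i : ℝ)) •
                (v (n + j - i) - u (((n + j - i : ℕ) : ℝ) * k))‖ ≤ C0 * k ^ 4) →
        ∀ n : ℕ, n + m ≤ N →
          ‖(k ^ m)⁻¹ • ∑ i ∈ Finset.range (m + 1),
              ((-1 : ℝ) ^ i * (m.choose i : ℝ)) •
                (F (v (n + m - i)) - F (u (((n + m - i : ℕ) : ℝ) * k)))‖ ≤ C * k ^ 4 := by
  have hU : ∀ j : ℕ, ∃ M : ℝ, 0 ≤ M ∧ (j ≤ m → ∀ k : ℝ, 0 < k →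
      ∀ t, 0 ≤ t → t + j * k ≤ T → ‖(fwdDiff k)^[j] u t‖ ≤ M * k^j) := by
    intro j
    by_cases hj : j ≤ m
    · obtain ⟨M, h, h'⟩ := fd_u T hT j u (hu.of_le (by norm_cast; omega))
      exact ⟨M, h, fun _ => h'⟩
    · exact ⟨0, le_rfl, fun h => absurd h hj⟩
  choose M hM0 hM using hU
  have hS : 0 ≤ ∑ j ∈ range (m+1), M j := Finset.sum_nonneg fun j _ => hM0 j
  set S := ∑ j ∈ range (m+1), M j with hSdef
  obtain ⟨C, hC, hcomp⟩ := fd_comp m (S + C0) B (by linarith) (fderiv ℝ F)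
    (hF.fderiv_right le_rfl)
    (fun i hi x => by rw [norm_iteratedFDeriv_fderiv]; exact hB (i+1) (by omega) (by omega) x)
  refine ⟨2^m * (C * C0), ?_⟩
  intro k hk hk1 N hN v hv n hn
  set e : ℕ → X := fun n => v n - u (n * k) with he
  have hE : ∀ i ≤ m, ∀ n, n + i ≤ N → ‖(fwdDiff (1:ℕ))^[i] e n‖ ≤ (C0 * k^4) * k^i := by
    intro i hi n hn
    have := hv i hi n hn
    rw [fd_sum e i n, norm_smul, norm_inv, Real.norm_of_nonneg (by positivity),
      inv_mul_le_iff₀ (by positivity)] at this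
    linarith
  rw [fd_sum (fun n => F (v n) - F (u (n * k))) m n, norm_smul, norm_inv,
    Real.norm_of_nonneg (by positivity), inv_mul_le_iff₀ (by positivity)]
  have e1 : (fun n : ℕ => F (v n) - F (u (n * k))) =
      fun n : ℕ => F ((fun n : ℕ => u (n * k)) n + e n) - F ((fun n : ℕ => u (n * k)) n) := by
    ext n; simp [he]
  rw [e1]
  apply fd_mvt F (hF.differentiable (by norm_cast))
  intro s hs
  refine (fd_leibniz k m N C (C0 * k^4)
    (fun n => fderiv ℝ F ((fun n : ℕ => u (n * k)) n + s • e n)) e ?_ hE n hn).trans_eq (by ring)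
  apply hcomp k hk N (fun n => (fun n : ℕ => u (n * k)) n + s • e n)
  intro i hi _ n hn
  have e2 : (fun n => (fun n : ℕ => u (n * k)) n + s • e n) =
    (fun n : ℕ => u (n * k)) + s • e := rfl
  rw [e2, fwdDiff_iter_add, fwdDiff_iter_const_smul, Pi.add_apply, fd_u_seq]
  have a1 := hM i hi k hk (n * k) (by positivity) (by
    have : ((n + i : ℕ) : ℝ) * k ≤ N * k := by gcongr
    push_cast at this
    linarith)
  have a2 := hE i hi n hn
  have a3 : M i ≤ S := Finset.single_le_sum (fun j _ => hM0 j) (by simp; omega)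
  have a4 : k^4 ≤ 1 := pow_le_one₀ hk.le hk1
  refine (norm_add_le _ _).trans ?_
  rw [Pi.smul_apply, norm_smul, Real.norm_of_nonneg hs.1, add_mul]
  refine add_le_add (a1.trans (by gcongr)) ?_
  calc s * ‖(fwdDiff (1:ℕ))^[i] e n‖ ≤ 1 * ‖(fwdDiff (1:ℕ))^[i] e n‖ := by
        gcongr; exact hs.2.le
    _ ≤ (C0 * k^4) * k^i := by rw [one_mul]; exact a2
    _ ≤ (C0 * 1) * k^i := by gcongr
    _ = _ := by ring
end

section
/- Let λ ∈ ℂ and k > 0, set z = λk, and apply the DC6RK2/4 scheme to the scalar problem u' = λu, u(0) = 1 (i.e. F(t,x) = λx on X = ℂ). Then for every n the inner RK4 stages satisfy u^{4,n,i} = q(z/5)^i u^{6,n} for i = 0, …, 5, the correction terms satisfy a_n = r(z) u^{6,n} and b_n = s(z) u^{6,n}, and the scheme reduces to u^{6,n+1} = R(z) u^{6,n}, so that u^{6,n} = R(z)^n; here q(z) = 1 + z + z²/2 + z³/6 + z⁴/24, r(z) = (125/384)(−3 − q(z/5) + 18q(z/5)² − 18q(z/5)³ + q(z/5)⁴ +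 3q(z/5)⁵), s(z) = (25/768)(145 − 387q(z/5) + 402q(z/5)² − 238q(z/5)³ + 93q(z/5)⁴ − 15q(z/5)⁵), and R(z) = 1 + z + z²/2 + r(z) + z·s(z). -/
open Finset

variable {X : Type*} [NormedAddCommGroup X] [NormedSpace ℝ X] [CompleteSpace X]

/-- Stability function of the classical fourth-order Runge–Kutta method. -/
noncomputable def rk4Stab (z : ℂ) : ℂ :=
  1 + z + z ^ 2 / 2 + z ^ 3 / 6 + z ^ 4 / 24

/-- The function `r` in the stability analysis of DC6RK2/4. -/
noncomputable def dcStabR (z : ℂ) : ℂ :=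
  (125 / 384 : ℂ) * (-3 - rk4Stab (z / 5) + 18 * rk4Stab (z / 5) ^ 2
    - 18 * rk4Stab (z / 5) ^ 3 + rk4Stab (z / 5) ^ 4 + 3 * rk4Stab (z / 5) ^ 5)

/-- The function `s` in the stability analysis of DC6RK2/4. -/
noncomputable def dcStabS (z : ℂ) : ℂ :=
  (25 / 768 : ℂ) * (145 - 387 * rk4Stab (z / 5) + 402 * rk4Stab (z / 5) ^ 2
    - 238 * rk4Stab (z / 5) ^ 3 + 93 * rk4Stab (z / 5) ^ 4 - 15 * rk4Stab (z / 5) ^ 5)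

/-- The stability function `R` of the DC6RK2/4 scheme. -/
noncomputable def dcStab (z : ℂ) : ℂ :=
  1 + z + z ^ 2 / 2 + dcStabR z + z * dcStabS z

/-- **stability analysis of DC6RK2/4 on `u' = λu`.**
Apply DC6RK2/4 with step `k > 0` to `u' = λu`, `u(0) = 1` on `ℂ`, and set `z = λk`.
Then the inner RK4 stages satisfy `u^{4,n,i} = q(z/5)^i u^{6,n}` for `i = 0, …, 5`,
the correction terms satisfy `aₙ = r(z) u^{6,n}` and `bₙ = s(z) u^{6,n}`, the scheme
reduces to `u^{6,n+1} = R(z) u^{6,n}`, and hence `u^{6,n} = R(z)^n`. -/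
theorem dc6rk24_stability_function (l : ℂ) (k : ℝ) (hk : 0 < k) :
    let F : ℝ → ℂ → ℂ := fun _ x => l * x
    let z : ℂ := l * (k : ℂ)
    let U : ℕ → ℂ := dcSeq F 1 k
    (∀ n : ℕ, ∀ i : ℕ, i ≤ 5 →
        rk4Iter F ((n : ℝ) * k) (k / 5) (U n) i = rk4Stab (z / 5) ^ i * U n) ∧
    (∀ n : ℕ, dcA (rk4Iter F ((n : ℝ) * k) (k / 5) (U n)) = dcStabR z * U n) ∧
    (∀ n : ℕ, dcB (rk4Iter F ((n : ℝ) * k) (k / 5) (U n)) = dcStabS z * U n) ∧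
    (∀ n : ℕ, U (n + 1) = dcStab z * U n) ∧
    (∀ n : ℕ, U n = dcStab z ^ n) := by
  intro F z U
  have hI : ∀ (t : ℝ) (x : ℂ) (i : ℕ),
      rk4Iter F t (k / 5) x i = rk4Stab (z / 5) ^ i * x := by
    intro t x i
    induction i with
    | zero => simp [rk4Iter]
    | succ i ih =>
      simp only [rk4Iter, ih, rk4Step, F]
      rw [pow_succ]
      generalize rk4Stab (z / 5) ^ i = p
      simp only [rk4Stab, z, Complex.real_smul]
      push_cast
      ring
  have hA : ∀ (t : ℝ) (x : ℂ), dcA (rk4Iter F t (k / 5) x) = dcStabR z * x := by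
    intro t x
    simp only [dcA, hI, dcStabR, Complex.real_smul]
    push_cast
    ring
  have hB : ∀ (t : ℝ) (x : ℂ), dcB (rk4Iter F t (k / 5) x) = dcStabS z * x := by
    intro t x
    simp only [dcB, hI, dcStabS, Complex.real_smul]
    push_cast
    ring
  have hS : ∀ n : ℕ, U (n + 1) = dcStab z * U n := by
    intro n
    change dcStep F ((n : ℝ) * k) k (U n) = _
    simp only [dcStep, hA, hB, dcStab]
    simp only [F, Complex.real_smul]
    generalize dcStabR z = r
    generalize dcStabS z = s
    simp only [z]
    push_cast
    ring
  refine ⟨fun n i _ => hI _ _ i, fun n => hA _ _, fun n => hB _ _, hS, ?_⟩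
  intro n
  induction n with
  | zero => simp [U, dcSeq]
  | succ n ih => rw [hS, ih, pow_succ]; ring
end

section
/- Let q(z) = 1 + z + z²/2 + z³/6 + z⁴/24, r(z) = (125/384)(−3 − q(z/5) + 18q(z/5)² − 18q(z/5)³ + q(z/5)⁴ + 3q(z/5)⁵), s(z) = (25/768)(145 − 387q(z/5) + 402q(z/5)² − 238q(z/5)³ + 93q(z/5)⁴ − 15q(z/5)⁵), and R(z) = 1 + z + z²/2 + r(z) + z·s(z). Then R is a polynomial of degree 21, and the polynomial R(z) − Σ_{i=0}^{6} z^i/i! is divisible by z^7; equivalently, the coefficient of z^i in R equals 1/i! for every i = 0, 1, …, 6. -/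
open Polynomial

/-- The stability polynomial of RK4, `q(z) = 1 + z + z²/2 + z³/6 + z⁴/24`, over `ℚ`. -/
noncomputable def qPoly : Polynomial ℚ :=
  C 1 + X + C (1 / 2) * X ^ 2 + C (1 / 6) * X ^ 3 + C (1 / 24) * X ^ 4

/-- `q(z/5)` as a polynomial in `z`. -/
noncomputable def qPoly5 : Polynomial ℚ := qPoly.comp (C (1 / 5) * X)

/-- The polynomial `r(z)` in the stability function of DC6RK2/4. -/
noncomputable def rPoly : Polynomial ℚ :=
  C (125 / 384) * (C (-3) - qPoly5 + C 18 * qPoly5 ^ 2 - C 18 * qPoly5 ^ 3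
    + qPoly5 ^ 4 + C 3 * qPoly5 ^ 5)

/-- The polynomial `s(z)` in the stability function of DC6RK2/4. -/
noncomputable def sPoly : Polynomial ℚ :=
  C (25 / 768) * (C 145 - C 387 * qPoly5 + C 402 * qPoly5 ^ 2 - C 238 * qPoly5 ^ 3
    + C 93 * qPoly5 ^ 4 - C 15 * qPoly5 ^ 5)

/-- The stability polynomial `R(z) = 1 + z + z²/2 + r(z) + z·s(z)` of DC6RK2/4. -/
noncomputable def RPoly : Polynomial ℚ :=
  C 1 + X + C (1 / 2) * X ^ 2 + rPoly + X * sPoly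

theorem RPoly_explicit : RPoly =
      C (1) * X ^ 0 +
      C (1) * X ^ 1 +
      C (1/2) * X ^ 2 +
      C (1/6) * X ^ 3 +
      C (1/24) * X ^ 4 +
      C (1/120) * X ^ 5 +
      C (1/720) * X ^ 6 +
      C (481/2880000) * X ^ 7 +
      C (119/9600000) * X ^ 8 +
      C (-373/2592000000) * X ^ 9 +
      C (-2681/12960000000) * X ^ 10 +
      C (-9593/259200000000) * X ^ 11 +
      C (-34141/7776000000000) * X ^ 12 +
      C (-6247/15552000000000) * X ^ 13 +
      C (-3863/129600000000000) * X ^ 14 +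
      C (-79/43200000000000) * X ^ 15 +
      C (-241/2592000000000000) * X ^ 16 +
      C (-1513/388800000000000000) * X ^ 17 +
      C (-17/129600000000000000) * X ^ 18 +
      C (-53/15552000000000000000) * X ^ 19 +
      C (-49/777600000000000000000) * X ^ 20 +
      C (-1/1555200000000000000000) * X ^ 21 := by
  apply Polynomial.funext
  intro x
  simp only [RPoly, rPoly, sPoly, qPoly5, qPoly, eval_add, eval_sub, eval_mul, eval_pow, eval_C,
    eval_X, eval_comp]
  ring

theorem RPoly_coeff (i : ℕ) (hi : i ≤ 6) : RPoly.coeff i = 1 / (Nat.factorial i : ℚ) := by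
  rw [RPoly_explicit]
  simp only [coeff_add, coeff_C_mul_X_pow]
  interval_cases i <;> norm_num [Nat.factorial]

/-- The stability function `R` of DC6RK2/4 is a polynomial of degree 21,
and `R(z) − ∑_{i=0}^{6} z^i/i!` is divisible by `z^7`; equivalently, the coefficient of
`z^i` in `R` equals `1/i!` for every `i = 0, 1, …, 6`. -/
theorem dc6rk24_stability_polynomial :
    RPoly.natDegree = 21 ∧
    (X ^ 7 : Polynomial ℚ) ∣
      (RPoly - ∑ i ∈ Finset.range 7, C (1 / (Nat.factorial i : ℚ)) * X ^ i) ∧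
    (∀ i : ℕ, i ≤ 6 → RPoly.coeff i = 1 / (Nat.factorial i : ℚ)) := by
  refine ⟨?_, ?_, RPoly_coeff⟩
  · rw [RPoly_explicit]
    compute_degree!
  · rw [X_pow_dvd_iff]
    intro d hd
    rw [coeff_sub, RPoly_coeff d (by omega), finset_sum_coeff]
    simp only [coeff_C_mul_X_pow]
    rw [Finset.sum_ite_eq, if_pos (Finset.mem_range.mpr hd), sub_self]
end

section
/- Define u : ℝ × ℝ → ℝ by u(x,t) = (1 + e^{x − 5t})^{−2}. Then u satisfies the Fisher equation ∂u/∂t(x,t) = ∂²u/∂x²(x,t) + 6·u(x,t)·(1 − u(x,t)) for all (x,t) ∈ ℝ², and u(x,0) = (1 + e^x)^{−2} for all x ∈ ℝ. -/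
/-- The travelling-wave function `u(x,t) = (1 + e^{x − 5t})^{−2}`. -/
noncomputable def fisherWave (x t : ℝ) : ℝ := ((1 + Real.exp (x - 5 * t)) ^ 2)⁻¹

/-- The function `u(x,t) = (1 + e^{x − 5t})^{−2}` satisfies the Fisher
equation `∂u/∂t = ∂²u/∂x² + 6u(1 − u)` on all of `ℝ²`, with `u(x,0) = (1 + e^x)^{−2}`. -/
theorem fisherWave_solves_fisher :
    (∀ x t : ℝ,
      deriv (fun τ => fisherWave x τ) t =
        deriv (deriv (fun y => fisherWave y t)) x
          + 6 * fisherWave x t * (1 - fisherWave x t)) ∧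
    (∀ x : ℝ, fisherWave x 0 = ((1 + Real.exp x) ^ 2)⁻¹) := by
  refine ⟨fun x t => ?_, fun x => by simp [fisherWave]⟩
  have hpos : ∀ y s : ℝ, 1 + Real.exp (y - 5 * s) ≠ 0 := fun y s => by positivity
  have ht : HasDerivAt (fun τ => fisherWave x τ)
      (10 * Real.exp (x - 5 * t) / (1 + Real.exp (x - 5 * t)) ^ 3) t := by
    have h0 : HasDerivAt (fun τ : ℝ => x - 5 * τ) (-(5 * 1)) t :=
      ((hasDerivAt_id t).const_mul 5).const_sub x
    have h1 := ((h0.exp.const_add 1).fun_pow 2).fun_inv (pow_ne_zero 2 (hpos x t))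
    refine h1.congr_deriv ?_
    have := hpos x t
    field_simp
    ring
  have hx : ∀ y, HasDerivAt (fun y => fisherWave y t)
      (-2 * Real.exp (y - 5 * t) / (1 + Real.exp (y - 5 * t)) ^ 3) y := by
    intro y
    have h0 : HasDerivAt (fun z : ℝ => z - 5 * t) 1 y := (hasDerivAt_id y).sub_const _
    have h1 := ((h0.exp.const_add 1).fun_pow 2).fun_inv (pow_ne_zero 2 (hpos y t))
    refine h1.congr_deriv ?_
    have := hpos y t
    field_simp
    ring
  have hd : deriv (fun y => fisherWave y t) =
      fun y => -2 * Real.exp (y - 5 * t) / (1 + Real.exp (y - 5 * t)) ^ 3 :=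
    funext fun y => (hx y).deriv
  have h0 : HasDerivAt (fun z : ℝ => z - 5 * t) 1 x := (hasDerivAt_id x).sub_const _
  have h2 := (h0.exp.const_mul (-2)).fun_div ((h0.exp.const_add 1).fun_pow 3)
    (pow_ne_zero 3 (hpos x t))
  rw [ht.deriv, hd, h2.deriv]
  unfold fisherWave
  have := hpos x t
  field_simp
  ring
end
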